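/- arXiv:1005.0448 — 7 statements merged into one kernel-verified Lean document; each statement's English description precedes it below -/
import Mathlib

section
/- Let F be an algebraically closed field, let V and W be finite-dimensional F-vector spaces with dim V = k and dim W = n, and let ψ₁, ψ₂ : W → V* be surjective linear maps to the dual space of V. Consider the subspace S = {φ ∈ Hom_F(V, W) : ψ₁∘φ and ψ₂∘φ are both symmetric} of Hom_F(V, W). Then dim S = kn − 2·(k(k−1)/2) if and only if there do not exist a 2-dimensional subspace V′ ⊆ V and scalars λ₁, λ₂ ∈ F, not both zero, such that λ₁·(ψ₁(w))(v) + λ₂·(ψ₂(w))(v) = 0 for all v ∈ V′ and all w ∈ W. -/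
open Module

/-!
The space in question is the kernel of the map sending `φ` to the antisymmetrizations of `ψ₁ ∘ φ`
and `ψ₂ ∘ φ`, whose target has dimension `2 * (k * (k - 1) / 2)`; it has the expected dimension
exactly when this map is surjective.

If a nonzero functional `f` vanishes on the range, evaluating `f` on wedges of linear forms gives
two alternating forms `A₁`, `A₂` on `V*`, not both zero, with `A₁ x (ψ₁ w) + A₂ x (ψ₂ w) = 0`.
Surjectivity of `ψ₁` gives `ker A₂ ≤ ker A₁`, hence `range A₁ ≤ range A₂`, and over an algebraically
closed field some `μ` and `x` satisfy `A₁ x = μ • A₂ x` and `A₂ x ≠ 0`. Then `A₁ - μ • A₂` has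
smaller rank than `A₂`; both ranks are even, so the image under `A₂` of `ker (A₁ - μ • A₂)` has
dimension at least two. Viewed in `V`, this image consists of vectors annihilated by
`μ • ψ₁ w + ψ₂ w` for all `w`.

Conversely, if `l₁ • ψ₁ + l₂ • ψ₂` vanishes on a plane, evaluating on a basis of that plane imposes
a nontrivial linear relation on the range.
-/

section LinearAlgebra

theorem exists_submodule_le_finrank_eq {R M : Type*} [Ring R] [StrongRankCondition R]
    [AddCommGroup M] [Module R M] {p : Submodule R M} {m : ℕ} (hm : m ≤ finrank R p) :
    ∃ q ≤ p, finrank R q = m := by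
  have := nontrivial_of_invariantBasisNumber R
  obtain ⟨v, hv⟩ := exists_linearIndependent_of_le_finrank hm
  refine ⟨(Submodule.span R (Set.range v)).map p.subtype, Submodule.map_subtype_le p _, ?_⟩
  rw [Submodule.finrank_map_subtype_eq, finrank_span_eq_card hv, Fintype.card_fin]

section DivisionRing

variable {K M N : Type*} [DivisionRing K] [AddCommGroup M] [Module K M] [AddCommGroup N]
  [Module K N] [FiniteDimensional K M]

theorem finrank_map_add_finrank_ker_of_le (f : M →ₗ[K] N) {p : Submodule K M}
    (hp : LinearMap.ker f ≤ p) :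
    finrank K (p.map f) + finrank K (LinearMap.ker f) = finrank K p := by
  rw [← (Submodule.comapSubtypeEquivOfLe hp).finrank_eq, ← LinearMap.range_domRestrict,
    ← LinearMap.ker_domRestrict]
  exact (f.domRestrict p).finrank_range_add_finrank_ker

theorem finrank_ker_eq_sub_iff_surjective [FiniteDimensional K N] (f : M →ₗ[K] N)
    (h : finrank K N ≤ finrank K M) :
    finrank K (LinearMap.ker f) = finrank K M - finrank K N ↔ Function.Surjective f := by
  have hrank := f.finrank_range_add_finrank_ker
  rw [← LinearMap.range_eq_top]
  constructor
  · intro hker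
    exact Submodule.eq_top_of_finrank_eq (by omega)
  · intro htop
    rw [htop, finrank_top] at hrank
    omega

end DivisionRing

variable {K M N : Type*} [Field K] [AddCommGroup M] [Module K M] [AddCommGroup N] [Module K N]

theorem exists_apply_eq_smul_apply_of_range_le [IsAlgClosed K] [FiniteDimensional K N]
    {f g : M →ₗ[K] N} (hfg : LinearMap.range f ≤ LinearMap.range g) (hg : g ≠ 0) :
    ∃ (μ : K) (x : M), g x ≠ 0 ∧ f x = μ • g x := by
  obtain ⟨s, hs⟩ := g.rangeRestrict.exists_rightInverse_of_surjective g.range_rangeRestrict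
  have hgs (u : LinearMap.range g) : g (s u) = u := congrArg Subtype.val (LinearMap.congr_fun hs u)
  let T : End K (LinearMap.range g) :=
    (f ∘ₗ s).codRestrict (LinearMap.range g) fun u => hfg ⟨s u, rfl⟩
  have : Nontrivial (LinearMap.range g) := by
    rwa [Submodule.nontrivial_iff_ne_bot, Ne, LinearMap.range_eq_bot]
  obtain ⟨μ, hμ⟩ := End.exists_eigenvalue T
  obtain ⟨u, hu⟩ := hμ.exists_hasEigenvector
  refine ⟨μ, s u, ?_, ?_⟩
  · simpa [hgs] using hu.2
  · rw [hgs]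
    exact congrArg Subtype.val hu.apply_eq_smul

theorem exists_alternatingMap_apply_eq_one {n : ℕ} {v : Fin n → M} (hv : LinearIndependent K v) :
    ∃ ω : M [⋀^Fin n]→ₗ[K] K, ω v = 1 := by
  obtain ⟨p, hp⟩ := (Fintype.linearCombination K v).exists_leftInverse_of_injective
    (LinearMap.ker_eq_bot.2 hv.fintypeLinearCombination_injective)
  have hpv : p ∘ v = Pi.basisFun K (Fin n) := by
    funext i
    simpa using LinearMap.congr_fun hp (Pi.single i 1)
  refine ⟨(Pi.basisFun K (Fin n)).det.compLinearMap p, ?_⟩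
  rw [← (Pi.basisFun K (Fin n)).det_self, ← hpv]
  rfl

end LinearAlgebra

section AlternatingBilinearForms

variable {K U W : Type*} [Field K] [AddCommGroup U] [Module K U] [AddCommGroup W] [Module K W]

theorem eq_zero_of_isAlt_of_apply_add_eq_zero {B : LinearMap.BilinForm K U} (hB : B.IsAlt)
    {x y : U} (hxy : B x y ≠ 0) {a b : K} (hx : B x (a • x + b • y) = 0)
    (hy : B y (a • x + b • y) = 0) : a = 0 ∧ b = 0 := by
  have hyx : B y x ≠ 0 := by rwa [Ne, hB.isRefl.eq_iff]
  simp only [map_add, map_smul, smul_eq_mul, hB.self_eq_zero, mul_zero, zero_add, add_zero,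
    mul_eq_zero, hxy, hyx, or_false] at hx hy
  exact ⟨hy, hx⟩

theorem isCompl_orthogonal_span_pair [FiniteDimensional K U] {B : LinearMap.BilinForm K U}
    (hB : B.IsAlt) {x y : U} (hxy : B x y ≠ 0) :
    IsCompl (Submodule.span K {x, y}) (B.orthogonal (Submodule.span K {x, y})) := by
  rw [LinearMap.BilinForm.isCompl_orthogonal_iff_disjoint hB.isRefl, Submodule.disjoint_def]
  intro v hv hv_orth
  obtain ⟨a, b, rfl⟩ := Submodule.mem_span_pair.1 hv
  obtain ⟨rfl, rfl⟩ := eq_zero_of_isAlt_of_apply_add_eq_zero hB hxy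
    (hv_orth x (Submodule.mem_span_of_mem (by simp)))
    (hv_orth y (Submodule.mem_span_of_mem (by simp)))
  simp

theorem finrank_span_pair_of_isAlt {B : LinearMap.BilinForm K U} (hB : B.IsAlt) {x y : U}
    (hxy : B x y ≠ 0) : finrank K (Submodule.span K {x, y}) = 2 := by
  have hli : LinearIndependent K ![x, y] := LinearIndependent.pair_iff.2 fun a b hab =>
    eq_zero_of_isAlt_of_apply_add_eq_zero hB hxy (by rw [hab, map_zero]) (by rw [hab, map_zero])
  rw [← Matrix.range_cons_cons_empty, finrank_span_eq_card hli, Fintype.card_fin]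

theorem finrank_range_eq_finrank_range_restrict_orthogonal_add [FiniteDimensional K U]
    {B : LinearMap.BilinForm K U} (hB : B.IsRefl) {P : Submodule K U}
    (hP : IsCompl P (B.orthogonal P)) :
    finrank K (LinearMap.range B) =
      finrank K (LinearMap.range (B.restrict (B.orthogonal P))) + finrank K P := by
  have hker_le : LinearMap.ker B ≤ B.orthogonal P := fun z hz w _ =>
    hB z w (LinearMap.congr_fun hz w)
  have hker : finrank K (LinearMap.ker (B.restrict (B.orthogonal P))) =
      finrank K (LinearMap.ker B) := by
    rw [LinearMap.BilinForm.ker_restrict_eq_of_codisjoint hP.symm.codisjoint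
      fun v hv w hw => hB w v (hv w hw)]
    exact (Submodule.comapSubtypeEquivOfLe hker_le).finrank_eq
  have hrank := LinearMap.finrank_range_add_finrank_ker B
  have hrank_restrict :=
    LinearMap.finrank_range_add_finrank_ker (B.restrict (B.orthogonal P))
  have hcompl := Submodule.finrank_add_eq_of_isCompl hP
  omega

theorem even_finrank_range_of_isAlt [FiniteDimensional K U] {B : LinearMap.BilinForm K U}
    (hB : B.IsAlt) : Even (finrank K (LinearMap.range B)) := by
  induction hd : finrank K U using Nat.strong_induction_on generalizing U with
  | _ d ih =>
  by_cases hB0 : B = 0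
  · rw [hB0, LinearMap.range_zero, finrank_bot]
    exact Even.zero
  obtain ⟨x, y, hxy⟩ : ∃ x y, B x y ≠ 0 := by
    contrapose! hB0
    exact LinearMap.ext₂ hB0
  have hP := isCompl_orthogonal_span_pair hB hxy
  have hP2 := finrank_span_pair_of_isAlt hB hxy
  have hsum := Submodule.finrank_add_eq_of_isCompl hP
  rw [finrank_range_eq_finrank_range_restrict_orthogonal_add hB.isRefl hP, hP2]
  exact (ih _ (by omega) (B := B.restrict _) (fun v => hB v) rfl).add even_two

theorem range_eq_dualAnnihilator_ker_of_isRefl [FiniteDimensional K U]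
    {B : LinearMap.BilinForm K U} (hB : B.IsRefl) :
    LinearMap.range B = (LinearMap.ker B).dualAnnihilator := by
  apply Submodule.eq_of_le_of_finrank_eq
  · rintro _ ⟨x, rfl⟩
    rw [Submodule.mem_dualAnnihilator]
    exact fun z hz => hB z x (LinearMap.congr_fun hz x)
  · have hrank := LinearMap.finrank_range_add_finrank_ker B
    have hann := Subspace.finrank_add_finrank_dualAnnihilator_eq (LinearMap.ker B)
    exact Nat.add_right_cancel (hrank.trans (hann.symm.trans (add_comm _ _)))

theorem exists_two_le_finrank_map_ker_sub_smul [IsAlgClosed K] [FiniteDimensional K U]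
    {A₁ A₂ : LinearMap.BilinForm K U} (hA₁ : A₁.IsAlt) (hA₂ : A₂.IsAlt)
    (hker : LinearMap.ker A₂ ≤ LinearMap.ker A₁) (hne : A₂ ≠ 0) :
    ∃ μ : K, 2 ≤ finrank K ((LinearMap.ker (A₁ - μ • A₂)).map A₂) := by
  have hrange : LinearMap.range A₁ ≤ LinearMap.range A₂ := by
    rw [range_eq_dualAnnihilator_ker_of_isRefl hA₁.isRefl,
      range_eq_dualAnnihilator_ker_of_isRefl hA₂.isRefl]
    exact Submodule.dualAnnihilator_anti hker
  obtain ⟨μ, x, hx, hμ⟩ := exists_apply_eq_smul_apply_of_range_le hrange hne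
  refine ⟨μ, ?_⟩
  set B := A₁ - μ • A₂ with hB
  have hBalt : B.IsAlt := hA₁.sub (hA₂.smul μ)
  have hker_le : LinearMap.ker A₂ ≤ LinearMap.ker B := fun z hz => by
    simp [hB, LinearMap.mem_ker.1 hz, LinearMap.mem_ker.1 (hker hz)]
  have hpos : 0 < finrank K ((LinearMap.ker B).map A₂) := by
    have hmem : A₂ x ∈ (LinearMap.ker B).map A₂ := ⟨x, by simp [hB, hμ], rfl⟩
    exact Submodule.one_le_finrank_iff.2 (Submodule.ne_bot_iff _ |>.2 ⟨_, hmem, hx⟩)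
  have hgap : finrank K ((LinearMap.ker B).map A₂) + finrank K (LinearMap.range B) =
      finrank K (LinearMap.range A₂) := by
    have hmap := finrank_map_add_finrank_ker_of_le A₂ hker_le
    have hrank₂ := LinearMap.finrank_range_add_finrank_ker A₂
    have hrankB := LinearMap.finrank_range_add_finrank_ker B
    omega
  obtain ⟨p, hp⟩ := even_finrank_range_of_isAlt hA₂
  obtain ⟨q, hq⟩ := even_finrank_range_of_isAlt hBalt
  omega

theorem exists_finrank_eq_two_forall_smul_add_eq_zero [IsAlgClosed K] [FiniteDimensional K U]
    {A₁ A₂ : LinearMap.BilinForm K U} (hA₁ : A₁.IsAlt) (hA₂ : A₂.IsAlt)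
    (hne : ¬ (A₁ = 0 ∧ A₂ = 0)) {ψ₁ ψ₂ : W →ₗ[K] U} (hψ₁ : Function.Surjective ψ₁)
    (hA : ∀ x w, A₁ x (ψ₁ w) + A₂ x (ψ₂ w) = 0) :
    ∃ (P : Submodule K (Dual K U)) (μ : K), finrank K P = 2 ∧
      ∀ p ∈ P, ∀ w, μ * p (ψ₁ w) + p (ψ₂ w) = 0 := by
  have hker : LinearMap.ker A₂ ≤ LinearMap.ker A₁ := fun x hx => LinearMap.ext fun u => by
    obtain ⟨w, rfl⟩ := hψ₁ u
    simpa [LinearMap.mem_ker.1 hx] using hA x w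
  have hA₂0 : A₂ ≠ 0 := fun h => hne ⟨by simpa [h, LinearMap.ker_eq_top] using hker, h⟩
  obtain ⟨μ, hμ⟩ := exists_two_le_finrank_map_ker_sub_smul hA₁ hA₂ hker hA₂0
  obtain ⟨P, hP, hP2⟩ := exists_submodule_le_finrank_eq hμ
  refine ⟨P, μ, hP2, fun p hp w => ?_⟩
  obtain ⟨x, hx, rfl⟩ := hP hp
  have hx' : A₁ x = μ • A₂ x := by simpa [sub_eq_zero] using hx
  simpa [hx'] using hA x w

end AlternatingBilinearForms

section Antisymmetrization

variable {R M : Type*} [CommRing R] [AddCommGroup M] [Module R M]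

/-- The alternating form `(u, v) ↦ B u v - B v u` attached to a bilinear form `B`; its vanishing
expresses that `B` is symmetric. There is no factor `1 / 2`, so characteristic two is allowed. -/
def antisymmetrization : LinearMap.BilinForm R M →ₗ[R] M [⋀^Fin 2]→ₗ[R] R where
  toFun B :=
    { toFun v := B (v 0) (v 1) - B (v 1) (v 0)
      map_update_add' v i x y := by fin_cases i <;> simp [add_sub_add_comm]
      map_update_smul' v i c x := by fin_cases i <;> simp [mul_sub]
      map_eq_zero_of_eq' v i j hv hij := by
        fin_cases i <;> fin_cases j <;> simp_all }
  map_add' B C := by ext v; simp [add_sub_add_comm]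
  map_smul' c B := by ext v; simp [mul_sub]

@[simp]
theorem antisymmetrization_apply (B : LinearMap.BilinForm R M) (v : Fin 2 → M) :
    antisymmetrization B v = B (v 0) (v 1) - B (v 1) (v 0) :=
  rfl

theorem antisymmetrization_eq_zero_iff {B : LinearMap.BilinForm R M} :
    antisymmetrization B = 0 ↔ ∀ x y, B x y = B y x := by
  refine ⟨fun h x y => ?_, fun h => by ext v; simp [h (v 0)]⟩
  simpa [sub_eq_zero] using DFunLike.congr_fun h ![x, y]

theorem antisymmetrization_surjective [Module.Free R M] :
    Function.Surjective (antisymmetrization (R := R) (M := M)) := by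
  classical
  intro ω
  obtain ⟨ι, e⟩ := Module.Free.exists_basis R M
  let : LinearOrder ι := linearOrderOfSTO WellOrderingRel
  let B : LinearMap.BilinForm R M :=
    e.constr R fun i => e.constr R fun j => if i < j then ω ![e i, e j] else 0
  have hB (i j : ι) : B (e i) (e j) = if i < j then ω ![e i, e j] else 0 := by
    simp [B, Basis.constr_basis]
  refine ⟨B, e.ext_alternating fun v hv => ?_⟩
  have hv01 : v 0 ≠ v 1 := hv.ne (by decide)
  have hω : ω ![e (v 1), e (v 0)] = -ω ![e (v 0), e (v 1)] := by
    rw [← ω.map_swap ![e (v 0), e (v 1)] (show (0 : Fin 2) ≠ 1 by decide)]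
    congr 1
    ext i
    fin_cases i <;> simp
  have hev : (fun i => e (v i)) = ![e (v 0), e (v 1)] := by
    ext i
    fin_cases i <;> simp
  rw [antisymmetrization_apply, hB, hB, hev, hω]
  rcases hv01.lt_or_gt with h | h <;> simp [h, h.not_gt]

theorem finrank_alternatingMap [Nontrivial R] [Module.Free R M] [Module.Finite R M] (n : ℕ) :
    finrank R (M [⋀^Fin n]→ₗ[R] R) = (finrank R M).choose n := by
  rw [exteriorPower.alternatingMapLinearEquiv.finrank_eq, finrank_linearMap_self,
    exteriorPower.finrank_eq]

instance finite_alternatingMap [Module.Free R M] [Module.Finite R M] (n : ℕ) :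
    Module.Finite R (M [⋀^Fin n]→ₗ[R] R) :=
  Module.Finite.equiv exteriorPower.alternatingMapLinearEquiv.symm

/-- The wedge product `x ∧ y` of two linear forms, as the alternating form
`(u, v) ↦ x u * y v - x v * y u`. It is bilinear in `(x, y)`, so that a functional on alternating
forms pulls back to an alternating form on the dual. -/
def dualWedge : Dual R M →ₗ[R] Dual R M →ₗ[R] M [⋀^Fin 2]→ₗ[R] R :=
  LinearMap.compr₂ LinearMap.smulRightₗ antisymmetrization

@[simp]
theorem dualWedge_apply (x y : Dual R M) (v : Fin 2 → M) :
    dualWedge x y v = x (v 0) * y (v 1) - x (v 1) * y (v 0) := by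
  simp [dualWedge]

theorem dualWedge_self (x : Dual R M) : dualWedge x x = 0 := by
  ext v
  simp [mul_comm]

theorem antisymmetrization_smulRight (x y : Dual R M) :
    antisymmetrization (x.smulRight y) = dualWedge x y :=
  rfl

theorem eq_zero_of_forall_dualWedge_eq_zero [Module.Free R M] [Module.Finite R M]
    {f : Dual R (M [⋀^Fin 2]→ₗ[R] R)} (hf : ∀ x y, f (dualWedge x y) = 0) : f = 0 := by
  ext ω
  obtain ⟨B, rfl⟩ := antisymmetrization_surjective ω
  let e := Module.Free.chooseBasis R M
  have hB : B = ∑ i, (e.coord i).smulRight (B (e i)) := e.ext fun j => by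
    simp [Finsupp.single_apply]
  rw [hB, map_sum, map_sum]
  exact Finset.sum_eq_zero fun i _ => hf (e.coord i) (B (e i))

end Antisymmetrization

section SymmetryDefect

variable {R V W : Type*} [CommRing R] [AddCommGroup V] [Module R V] [AddCommGroup W] [Module R W]

/-- The pair of alternating forms measuring how far `ψ₁ ∘ φ` and `ψ₂ ∘ φ` are from being symmetric.
Its kernel is the space of `φ` for which both are symmetric. -/
def symmetryDefect (ψ₁ ψ₂ : W →ₗ[R] Dual R V) :
    (V →ₗ[R] W) →ₗ[R] (V [⋀^Fin 2]→ₗ[R] R) × (V [⋀^Fin 2]→ₗ[R] R) :=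
  (antisymmetrization ∘ₗ ψ₁.compRight R).prod (antisymmetrization ∘ₗ ψ₂.compRight R)

theorem symmetryDefect_apply (ψ₁ ψ₂ : W →ₗ[R] Dual R V) (φ : V →ₗ[R] W) :
    symmetryDefect ψ₁ ψ₂ φ = (antisymmetrization (ψ₁ ∘ₗ φ), antisymmetrization (ψ₂ ∘ₗ φ)) :=
  rfl

theorem mem_ker_symmetryDefect {ψ₁ ψ₂ : W →ₗ[R] Dual R V} {φ : V →ₗ[R] W} :
    φ ∈ LinearMap.ker (symmetryDefect ψ₁ ψ₂) ↔
      (∀ v₁ v₂, ψ₁ (φ v₁) v₂ = ψ₁ (φ v₂) v₁) ∧ ∀ v₁ v₂, ψ₂ (φ v₁) v₂ = ψ₂ (φ v₂) v₁ := by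
  rw [LinearMap.mem_ker, symmetryDefect_apply, Prod.mk_eq_zero, antisymmetrization_eq_zero_iff,
    antisymmetrization_eq_zero_iff]
  rfl

theorem symmetryDefect_smulRight (ψ₁ ψ₂ : W →ₗ[R] Dual R V) (x : Dual R V) (w : W) :
    symmetryDefect ψ₁ ψ₂ (x.smulRight w) = (dualWedge x (ψ₁ w), dualWedge x (ψ₂ w)) := by
  have hcomp (ψ : W →ₗ[R] Dual R V) : ψ ∘ₗ x.smulRight w = x.smulRight (ψ w) :=
    LinearMap.ext fun v => by simp
  simp only [symmetryDefect_apply, hcomp, antisymmetrization_smulRight]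

theorem mul_symmetryDefect_add_eq_zero {ψ₁ ψ₂ : W →ₗ[R] Dual R V} {l₁ l₂ : R} {v : Fin 2 → V}
    (hv : ∀ i w, l₁ * ψ₁ w (v i) + l₂ * ψ₂ w (v i) = 0) (φ : V →ₗ[R] W) :
    l₁ * (symmetryDefect ψ₁ ψ₂ φ).1 v + l₂ * (symmetryDefect ψ₁ ψ₂ φ).2 v = 0 := by
  simp only [symmetryDefect_apply, antisymmetrization_apply, LinearMap.comp_apply]
  linear_combination hv 1 (φ (v 0)) - hv 0 (φ (v 1))

end SymmetryDefect

section Criterion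

variable {F V W : Type*} [Field F] [AddCommGroup V] [Module F V] [AddCommGroup W] [Module F W]
  {ψ₁ ψ₂ : W →ₗ[F] Dual F V}

theorem eq_zero_and_eq_zero_of_symmetryDefect_surjective
    (hsurj : Function.Surjective (symmetryDefect ψ₁ ψ₂)) {V' : Submodule F V}
    (hV' : finrank F V' = 2) {l₁ l₂ : F} (hl : ∀ v ∈ V', ∀ w, l₁ * ψ₁ w v + l₂ * ψ₂ w v = 0) :
    l₁ = 0 ∧ l₂ = 0 := by
  obtain ⟨b, hb⟩ := exists_linearIndependent_of_le_finrank hV'.ge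
  obtain ⟨ω, hω⟩ := exists_alternatingMap_apply_eq_one (hb.map' V'.subtype V'.ker_subtype)
  have hzero (η : (V [⋀^Fin 2]→ₗ[F] F) × (V [⋀^Fin 2]→ₗ[F] F)) :
      l₁ * η.1 (V'.subtype ∘ b) + l₂ * η.2 (V'.subtype ∘ b) = 0 := by
    obtain ⟨φ, rfl⟩ := hsurj η
    exact mul_symmetryDefect_add_eq_zero (fun i => hl _ (b i).2) φ
  exact ⟨
    by simpa only [hω, AlternatingMap.zero_apply, mul_one, mul_zero, add_zero] using hzero (ω, 0),
    by simpa only [hω, AlternatingMap.zero_apply, mul_one, mul_zero, zero_add] using hzero (0, ω)⟩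

theorem exists_finrank_eq_two_of_not_surjective_symmetryDefect [IsAlgClosed F]
    [FiniteDimensional F V] (hψ₁ : Function.Surjective ψ₁)
    (hsurj : ¬ Function.Surjective (symmetryDefect ψ₁ ψ₂)) :
    ∃ (V' : Submodule F V) (μ : F), finrank F V' = 2 ∧
      ∀ v ∈ V', ∀ w, μ * ψ₁ w v + ψ₂ w v = 0 := by
  rw [← LinearMap.range_eq_top, ← Ne, ← lt_top_iff_ne_top] at hsurj
  obtain ⟨f, hf0, hf⟩ := Submodule.exists_le_ker_of_lt_top _ hsurj
  let A₁ := dualWedge.compr₂ (f ∘ₗ LinearMap.inl F _ _)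
  let A₂ := dualWedge.compr₂ (f ∘ₗ LinearMap.inr F _ _)
  have hA₁ : A₁.IsAlt := fun x => by simp [A₁, dualWedge_self, Prod.mk_zero_zero]
  have hA₂ : A₂.IsAlt := fun x => by simp [A₂, dualWedge_self, Prod.mk_zero_zero]
  have hne : ¬ (A₁ = 0 ∧ A₂ = 0) := fun ⟨h₁, h₂⟩ => hf0 <| LinearMap.prod_ext
    (eq_zero_of_forall_dualWedge_eq_zero (LinearMap.congr_fun₂ h₁))
    (eq_zero_of_forall_dualWedge_eq_zero (LinearMap.congr_fun₂ h₂))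
  have hA (x : Dual F V) (w : W) : A₁ x (ψ₁ w) + A₂ x (ψ₂ w) = 0 := by
    have h : f (symmetryDefect ψ₁ ψ₂ (x.smulRight w)) = 0 := hf ⟨_, rfl⟩
    rw [symmetryDefect_smulRight] at h
    simpa [A₁, A₂, ← map_add] using h
  obtain ⟨P, μ, hP, hPμ⟩ :=
    exists_finrank_eq_two_forall_smul_add_eq_zero hA₁ hA₂ hne hψ₁ hA
  refine ⟨P.map (evalEquiv F V).symm.toLinearMap, μ, by rw [LinearEquiv.finrank_map_eq, hP], ?_⟩
  rintro _ ⟨p, hp, rfl⟩ w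
  simpa using hPμ p hp w

theorem surjective_symmetryDefect_iff [IsAlgClosed F] [FiniteDimensional F V]
    (hψ₁ : Function.Surjective ψ₁) :
    Function.Surjective (symmetryDefect ψ₁ ψ₂) ↔
      ¬ ∃ (V' : Submodule F V) (l₁ l₂ : F),
        finrank F V' = 2 ∧ ¬ (l₁ = 0 ∧ l₂ = 0) ∧
        ∀ v ∈ V', ∀ w : W, l₁ * ψ₁ w v + l₂ * ψ₂ w v = 0 := by
  refine ⟨?_, fun h => ?_⟩
  · rintro hsurj ⟨V', l₁, l₂, hV', hne, hl⟩
    exact hne (eq_zero_and_eq_zero_of_symmetryDefect_surjective hsurj hV' hl)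
  · by_contra hsurj
    obtain ⟨V', μ, hV', hμ⟩ := exists_finrank_eq_two_of_not_surjective_symmetryDefect hψ₁ hsurj
    exact h ⟨V', μ, 1, hV', by simp, by simpa using hμ⟩

end Criterion

theorem statement0_general (F : Type*) [Field F] [IsAlgClosed F]
    (V W : Type*) [AddCommGroup V] [Module F V] [AddCommGroup W] [Module F W]
    [FiniteDimensional F V] [FiniteDimensional F W]
    (k n : ℕ) (hk : finrank F V = k) (hn : finrank F W = n)
    (ψ₁ ψ₂ : W →ₗ[F] Module.Dual F V)
    (hψ₁ : Function.Surjective ψ₁)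
    (S : Submodule F (V →ₗ[F] W))
    (hS : ∀ φ : V →ₗ[F] W, φ ∈ S ↔
      ((∀ v₁ v₂ : V, ψ₁ (φ v₁) v₂ = ψ₁ (φ v₂) v₁) ∧
       (∀ v₁ v₂ : V, ψ₂ (φ v₁) v₂ = ψ₂ (φ v₂) v₁))) :
    finrank F S = k * n - 2 * (k * (k - 1) / 2) ↔
      ¬ ∃ (V' : Submodule F V) (l₁ l₂ : F),
        finrank F V' = 2 ∧ ¬ (l₁ = 0 ∧ l₂ = 0) ∧
        ∀ v ∈ V', ∀ w : W, l₁ * ψ₁ w v + l₂ * ψ₂ w v = 0 := by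
  have hS_ker : S = LinearMap.ker (symmetryDefect ψ₁ ψ₂) :=
    Submodule.ext fun φ => (hS φ).trans mem_ker_symmetryDefect.symm
  have hsource : finrank F (V →ₗ[F] W) = k * n := by rw [finrank_linearMap, hk, hn]
  have htarget : finrank F ((V [⋀^Fin 2]→ₗ[F] F) × (V [⋀^Fin 2]→ₗ[F] F)) =
      2 * (k * (k - 1) / 2) := by
    rw [finrank_prod, finrank_alternatingMap, hk, Nat.choose_two_right, two_mul]
  have hkn : k ≤ n := by
    have := LinearMap.finrank_le_finrank_of_surjective hψ₁
    rwa [Subspace.dual_finrank_eq, hk, hn] at this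
  have hle : 2 * (k * (k - 1) / 2) ≤ k * n :=
    (Nat.mul_div_le _ _).trans (Nat.mul_le_mul_left _ (by omega))
  rw [← surjective_symmetryDefect_iff hψ₁, hS_ker, ← hsource, ← htarget]
  exact finrank_ker_eq_sub_iff_surjective _ (by rwa [hsource, htarget])

/-- (Proposition on doubly symmetric conditions, Osserman
"Brill-Noether loci with fixed determinant in rank 2", Prop. `dsg-main`.)
Over an algebraically closed field `F`, with `dim V = k`, `dim W = n`, and
surjective linear maps `ψ₁ ψ₂ : W → V*`, the subspace
`S = {φ : V →ₗ W | ψ₁ ∘ φ and ψ₂ ∘ φ are symmetric}` has dimension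
`k * n - 2 * (k * (k - 1) / 2)` if and only if there is no `2`-dimensional
subspace `V' ⊆ V` and scalars `λ₁, λ₂`, not both zero, with
`λ₁ • ψ₁(w)(v) + λ₂ • ψ₂(w)(v) = 0` for all `v ∈ V'`, `w ∈ W`. -/
theorem statement0 (F : Type*) [Field F] [IsAlgClosed F]
    (V W : Type*) [AddCommGroup V] [Module F V] [AddCommGroup W] [Module F W]
    [FiniteDimensional F V] [FiniteDimensional F W]
    (k n : ℕ) (hk : finrank F V = k) (hn : finrank F W = n)
    (ψ₁ ψ₂ : W →ₗ[F] Module.Dual F V)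
    (hψ₁ : Function.Surjective ψ₁) (hψ₂ : Function.Surjective ψ₂)
    (S : Submodule F (V →ₗ[F] W))
    (hS : ∀ φ : V →ₗ[F] W, φ ∈ S ↔
      ((∀ v₁ v₂ : V, ψ₁ (φ v₁) v₂ = ψ₁ (φ v₂) v₁) ∧
       (∀ v₁ v₂ : V, ψ₂ (φ v₁) v₂ = ψ₂ (φ v₂) v₁))) :
    finrank F S = k * n - 2 * (k * (k - 1) / 2) ↔
      ¬ ∃ (V' : Submodule F V) (l₁ l₂ : F),
        finrank F V' = 2 ∧ ¬ (l₁ = 0 ∧ l₂ = 0) ∧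
        ∀ v ∈ V', ∀ w : W, l₁ * ψ₁ w v + l₂ * ψ₂ w v = 0 :=
  statement0_general F V W k n hk hn ψ₁ ψ₂ hψ₁ S hS
end

section
/- Let F be a field, E an F-vector space of finite dimension r, and B an alternating bilinear form on E with radical K of dimension p; write r − p = 2δ. Then for integers k ≥ 0 and i ≥ 0, there exists a subspace V ⊆ E of dimension k which is totally isotropic for B and satisfies dim(V ∩ K) = i if and only if k − δ ≤ i, i ≤ k, and i ≤ p. -/
open Module

/-!
Every totally isotropic subspace of an alternating form lies in a maximal one `L`. If `x` is
orthogonal to `L`, then `L + ⟨x⟩` is again totally isotropic because `B x x = 0`, so `x ∈ L` and `L`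
is its own orthogonal complement. Hence `L` contains the radical `K`, and `2 dim L = r + p`, that
is, `dim L = p + δ`. Since every subspace of `L` is totally isotropic, what remains is to find the
pairs `(dim V, dim (V ∩ K))` for the subspaces `V` of a fixed `L ⊇ K`; all of them are realised by
sums of a subspace of `K` and a subspace of a complement of `K` in `L`.
-/

section Subspaces

variable {F E : Type*} [DivisionRing F] [AddCommGroup E] [Module F E]

lemma exists_le_finrank_eq {K : Submodule F E} {n : ℕ} (hn : n ≤ finrank F K) :
    ∃ A ≤ K, finrank F A = n := by
  obtain ⟨v, hv⟩ := exists_linearIndependent_of_le_finrank hn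
  refine ⟨(Submodule.span F (Set.range v)).map K.subtype, K.map_subtype_le _, ?_⟩
  rw [Submodule.finrank_map_subtype_eq, finrank_span_eq_card hv, Fintype.card_fin]

lemma finrank_sup_of_disjoint {A C : Submodule F E} [FiniteDimensional F A]
    [FiniteDimensional F C] (h : Disjoint A C) :
    finrank F ↥(A ⊔ C) = finrank F A + finrank F C := by
  rw [← Submodule.finrank_sup_add_finrank_inf_eq, h.eq_bot, finrank_bot, add_zero]

lemma exists_le_finrank_eq_finrank_inf_eq_iff {K L : Submodule F E} [FiniteDimensional F L]
    (hKL : K ≤ L) {k i : ℕ} :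
    (∃ V ≤ L, finrank F V = k ∧ finrank F ↥(V ⊓ K) = i) ↔
      k + finrank F K ≤ finrank F L + i ∧ i ≤ k ∧ i ≤ finrank F K := by
  have : FiniteDimensional F K := Submodule.finiteDimensional_of_le hKL
  constructor
  · rintro ⟨V, hVL, rfl, rfl⟩
    have : FiniteDimensional F V := Submodule.finiteDimensional_of_le hVL
    refine ⟨?_, Submodule.finrank_mono inf_le_left, Submodule.finrank_mono inf_le_right⟩
    rw [← Submodule.finrank_sup_add_finrank_inf_eq]
    gcongr
    exact Submodule.finrank_mono (sup_le hVL hKL)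
  · rintro ⟨hkL, hik, hiK⟩
    obtain ⟨W, hKW, rfl⟩ := IsModularLattice.exists_disjoint_and_sup_eq hKL
    have : FiniteDimensional F W := Submodule.finiteDimensional_of_le (le_sup_right : W ≤ K ⊔ W)
    rw [finrank_sup_of_disjoint hKW] at hkL
    obtain ⟨A, hAK, hA⟩ := exists_le_finrank_eq hiK
    obtain ⟨C, hCW, hC⟩ := exists_le_finrank_eq (K := W) (n := k - i) (by omega)
    have : FiniteDimensional F A := Submodule.finiteDimensional_of_le hAK
    have : FiniteDimensional F C := Submodule.finiteDimensional_of_le hCW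
    have hCK : C ⊓ K = ⊥ := (hKW.symm.mono_left hCW).eq_bot
    refine ⟨A ⊔ C, sup_le_sup hAK hCW, ?_, ?_⟩
    · rw [finrank_sup_of_disjoint (hKW.mono hAK hCW), hA, hC, Nat.add_sub_cancel' hik]
    · rw [sup_inf_assoc_of_le C hAK, hCK, sup_bot_eq, hA]

end Subspaces

section TotallyIsotropic

variable {R M : Type*} [CommRing R] [AddCommGroup M] [Module R M]
  {B : LinearMap.BilinForm R M} {V W : Submodule R M}

/-- A submodule is totally isotropic for `B` if `B` vanishes identically on it. -/
def IsTotallyIsotropic (B : LinearMap.BilinForm R M) (V : Submodule R M) : Prop :=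
  ∀ v ∈ V, ∀ w ∈ V, B v w = 0

lemma isTotallyIsotropic_iff_le_orthogonal : IsTotallyIsotropic B V ↔ V ≤ B.orthogonal V :=
  ⟨fun h v hv w hw ↦ h w hw v hv, fun h v hv _ hw ↦ h hw v hv⟩

lemma isTotallyIsotropic_bot : IsTotallyIsotropic B ⊥ :=
  isTotallyIsotropic_iff_le_orthogonal.2 bot_le

lemma isTotallyIsotropic_span_singleton {x : M} (hx : B x x = 0) :
    IsTotallyIsotropic B (Submodule.span R {x}) := by
  intro v hv w hw
  obtain ⟨a, rfl⟩ := Submodule.mem_span_singleton.1 hv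
  obtain ⟨b, rfl⟩ := Submodule.mem_span_singleton.1 hw
  simp [hx]

namespace IsTotallyIsotropic

lemma mono (hW : IsTotallyIsotropic B W) (hVW : V ≤ W) : IsTotallyIsotropic B V :=
  fun v hv w hw ↦ hW v (hVW hv) w (hVW hw)

lemma sup (hB : B.IsRefl) (hV : IsTotallyIsotropic B V) (hW : IsTotallyIsotropic B W)
    (hWV : W ≤ B.orthogonal V) : IsTotallyIsotropic B (V ⊔ W) := by
  intro x hx y hy
  obtain ⟨v, hv, w, hw, rfl⟩ := Submodule.mem_sup.1 hx
  obtain ⟨v', hv', w', hw', rfl⟩ := Submodule.mem_sup.1 hy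
  simp [hV v hv v' hv', hW w hw w' hw', hWV hw' v hv, hB _ _ (hWV hw v' hv')]

lemma exists_le_maximal (hV : IsTotallyIsotropic B V) :
    ∃ L, V ≤ L ∧ Maximal (IsTotallyIsotropic B) L := by
  refine zorn_le_nonempty₀ {U | IsTotallyIsotropic B U} (fun c hc hchain U hU ↦ ?_) V hV
  refine ⟨sSup c, fun v hv w hw ↦ ?_, fun _ ↦ le_sSup⟩
  obtain ⟨V₁, hV₁, hvV₁⟩ := (Submodule.mem_sSup_of_directed ⟨U, hU⟩ hchain.directedOn).1 hv
  obtain ⟨V₂, hV₂, hwV₂⟩ := (Submodule.mem_sSup_of_directed ⟨U, hU⟩ hchain.directedOn).1 hw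
  obtain ⟨V₃, hV₃, hV₁₃, hV₂₃⟩ := hchain.directedOn V₁ hV₁ V₂ hV₂
  exact hc hV₃ v (hV₁₃ hvV₁) w (hV₂₃ hwV₂)

end IsTotallyIsotropic

lemma orthogonal_eq_self_of_maximal_isTotallyIsotropic (hB : B.IsAlt)
    (hV : Maximal (IsTotallyIsotropic B) V) : B.orthogonal V = V := by
  refine le_antisymm (fun x hx ↦ ?_) (isTotallyIsotropic_iff_le_orthogonal.1 hV.prop)
  have hsup : IsTotallyIsotropic B (V ⊔ Submodule.span R {x}) :=
    hV.prop.sup hB.isRefl (isTotallyIsotropic_span_singleton (hB x)) (by simpa using hx)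
  exact hV.le_of_ge hsup le_sup_left
    (Submodule.mem_sup_right (Submodule.mem_span_singleton_self x))

lemma IsTotallyIsotropic.exists_le_orthogonal_eq_self (hB : B.IsAlt)
    (hV : IsTotallyIsotropic B V) : ∃ L, V ≤ L ∧ B.orthogonal L = L :=
  let ⟨L, hVL, hL⟩ := hV.exists_le_maximal
  ⟨L, hVL, orthogonal_eq_self_of_maximal_isTotallyIsotropic hB hL⟩

lemma ker_le_orthogonal (hB : B.IsRefl) : LinearMap.ker B ≤ B.orthogonal V :=
  LinearMap.BilinForm.orthogonal_top_eq_ker hB ▸ LinearMap.BilinForm.orthogonal_le le_top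

end TotallyIsotropic

lemma two_mul_finrank_of_orthogonal_eq_self {F E : Type*} [Field F] [AddCommGroup E] [Module F E]
    [FiniteDimensional F E] {B : LinearMap.BilinForm F E} (hB : B.IsRefl) {L : Submodule F E}
    (hL : B.orthogonal L = L) :
    2 * finrank F L = finrank F E + finrank F (LinearMap.ker B) := by
  have hker : LinearMap.ker B ≤ L := hL ▸ ker_le_orthogonal hB
  have hdim := LinearMap.BilinForm.finrank_add_finrank_orthogonal' (B := B) L
  rwa [hL, inf_eq_right.2 hker, ← two_mul] at hdim

/-- If `B` is an alternating bilinear form on an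
`r`-dimensional space `E` over a field `F`, with radical `K` of dimension `p`,
where `r - p = 2δ`, then for `k, i ≥ 0` there exists a totally isotropic
subspace `V` of dimension `k` with `dim (V ∩ K) = i` if and only if
`k - δ ≤ i`, `i ≤ k` and `i ≤ p`. -/
theorem statement4 (F : Type*) [Field F]
    (E : Type*) [AddCommGroup E] [Module F E] [FiniteDimensional F E]
    (r p δ : ℕ) (hr : finrank F E = r)
    (B : E →ₗ[F] E →ₗ[F] F) (halt : ∀ v : E, B v v = 0)
    (K : Submodule F E) (hK : ∀ e : E, e ∈ K ↔ ∀ v : E, B e v = 0)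
    (hp : finrank F K = p) (hδ : r - p = 2 * δ) (k i : ℕ) :
    (∃ V : Submodule F E, finrank F V = k ∧
        (∀ v ∈ V, ∀ w ∈ V, B v w = 0) ∧ finrank F ↥(V ⊓ K) = i) ↔
      (k - δ ≤ i ∧ i ≤ k ∧ i ≤ p) := by
  have hB : LinearMap.BilinForm.IsAlt B := halt
  obtain rfl : K = LinearMap.ker B := by ext e; simp [hK, LinearMap.ext_iff]
  have hpr : p ≤ r := hp ▸ hr ▸ Submodule.finrank_le _
  have subspaces_iff {L : Submodule F E} (hL : LinearMap.BilinForm.orthogonal B L = L) :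
      (∃ V ≤ L, finrank F V = k ∧ finrank F ↥(V ⊓ LinearMap.ker B) = i) ↔
        k - δ ≤ i ∧ i ≤ k ∧ i ≤ p := by
    have hdim := two_mul_finrank_of_orthogonal_eq_self hB.isRefl hL
    rw [exists_le_finrank_eq_finrank_inf_eq_iff (hL ▸ ker_le_orthogonal hB.isRefl)]
    omega
  constructor
  · rintro ⟨V, hVk, hV, hVi⟩
    obtain ⟨L, hVL, hL⟩ := IsTotallyIsotropic.exists_le_orthogonal_eq_self hB hV
    exact (subspaces_iff hL).1 ⟨V, hVL, hVk, hVi⟩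
  · intro h
    obtain ⟨L, -, hL⟩ := isTotallyIsotropic_bot.exists_le_orthogonal_eq_self hB
    obtain ⟨V, hVL, hVk, hVi⟩ := (subspaces_iff hL).2 h
    exact ⟨V, hVk, (isTotallyIsotropic_iff_le_orthogonal.2 hL.ge).mono hVL, hVi⟩
end

section
/- Let F be a field, let V and W be finite-dimensional F-vector spaces with dim V = k and dim W = n, and let ψ : W → V* be a surjective linear map to the dual space of V. Then the set {φ ∈ Hom_F(V, W) : (ψ(φ(v₁)))(v₂) = (ψ(φ(v₂)))(v₁) for all v₁, v₂ ∈ V} is a linear subspace of Hom_F(V, W) of dimension kn − k(k−1)/2. -/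
open Module

/-!
Since `V` is projective and `ψ` is surjective, `φ ↦ ψ ∘ φ` maps `Hom(V, W)` onto the space of
bilinear forms on `V`. The subspace in question is the preimage of the symmetric forms, so its
codimension is that of the symmetric forms, namely `k ^ 2 - (k + 1).choose 2 = k.choose 2`.
-/

open LinearMap (BilinForm)

section SymmetricForms

variable (R V : Type*) [CommSemiring R] [AddCommMonoid V] [Module R V]

/-- The submodule of symmetric forms in the module of bilinear forms on `V`. -/
def symmetricForms : Submodule R (BilinForm R V) where
  carrier := {B | B.IsSymm}
  zero_mem' := BilinForm.isSymm_zero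
  add_mem' := BilinForm.IsSymm.add
  smul_mem' c _ hB := hB.smul c

variable {R V}

theorem mem_symmetricForms {B : BilinForm R V} : B ∈ symmetricForms R V ↔ B.IsSymm :=
  Iff.rfl

/-- The Gram coordinates of a symmetric bilinear form: its values on unordered pairs of vectors
of a basis `b`. -/
noncomputable def symmetricFormsEquivSym2 {ι : Type*} (b : Basis ι R V) :
    symmetricForms R V ≃ₗ[R] (Sym2 ι → R) where
  toFun B := Sym2.lift ⟨fun i j ↦ B.1 (b i) (b j), fun i j ↦ B.2.eq (b i) (b j)⟩
  invFun f := ⟨b.constr R fun i ↦ b.constr R fun j ↦ f s(i, j), by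
    refine (BilinForm.isSymm_iff_basis b).mpr fun i j ↦ ?_
    simp only [Basis.constr_basis, Sym2.eq_swap]⟩
  map_add' _ _ := funext <| Sym2.ind fun _ _ ↦ rfl
  map_smul' _ _ := funext <| Sym2.ind fun _ _ ↦ rfl
  left_inv B := Subtype.ext <| b.ext fun i ↦ b.ext fun j ↦ by
    simp only [Basis.constr_basis, Sym2.lift_mk]
  right_inv f := funext <| Sym2.ind fun i j ↦ by
    simp only [Sym2.lift_mk, Basis.constr_basis]

theorem finrank_symmetricForms [Nontrivial R] [Module.Free R V] [Module.Finite R V] :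
    finrank R (symmetricForms R V) = (finrank R V + 1).choose 2 := by
  rw [(symmetricFormsEquivSym2 (Free.chooseBasis R V)).finrank_eq,
    finrank_fintype_fun_eq_card, Sym2.card, finrank_eq_card_chooseBasisIndex]

end SymmetricForms

theorem finrank_comap_add_finrank_of_surjective {R M N : Type*} [CommRing R] [IsDomain R]
    [AddCommGroup M] [Module R M] [Module.Finite R M] [AddCommGroup N] [Module R N]
    {f : M →ₗ[R] N} (hf : Function.Surjective f) (p : Submodule R N) :
    finrank R (p.comap f) + finrank R N = finrank R p + finrank R M := by
  have : Module.Finite R N := .of_surjective f hf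
  have hker : LinearMap.ker (p.mkQ ∘ₗ f) = p.comap f := by
    rw [LinearMap.ker_comp, p.ker_mkQ]
  have hquot : finrank R (M ⧸ p.comap f) = finrank R (N ⧸ p) := by
    rw [← hker]
    exact ((p.mkQ ∘ₗ f).quotKerEquivOfSurjective (p.mkQ_surjective.comp hf)).finrank_eq
  have hM := (p.comap f).finrank_quotient_add_finrank
  have hN := p.finrank_quotient_add_finrank
  lia

theorem choose_two_add_succ_choose_two (k : ℕ) : k.choose 2 + (k + 1).choose 2 = k * k := by
  induction k with
  | zero => rfl
  | succ k ih =>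
    rw [Nat.choose_succ_succ' (k + 1) 1, Nat.choose_one_right]
    have hpascal : (k + 1).choose 2 = k + k.choose 2 := by
      rw [Nat.choose_succ_succ', Nat.choose_one_right]
    linarith

section SymmetricComp

variable {R V W : Type*} [CommRing R] [AddCommGroup V] [Module R V] [AddCommGroup W] [Module R W]

/-- The submodule of the maps `φ : V → W` for which the bilinear form `ψ ∘ φ` is symmetric. -/
def symmetricComp (ψ : W →ₗ[R] Dual R V) : Submodule R (V →ₗ[R] W) :=
  (symmetricForms R V).comap (ψ.compRight R)

theorem mem_symmetricComp {ψ : W →ₗ[R] Dual R V} {φ : V →ₗ[R] W} :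
    φ ∈ symmetricComp ψ ↔ ∀ v₁ v₂, ψ (φ v₁) v₂ = ψ (φ v₂) v₁ :=
  mem_symmetricForms.trans BilinForm.isSymm_def

theorem finrank_symmetricComp_add_choose [IsDomain R] [Module.Free R V] [Module.Finite R V]
    [Module.Free R W] [Module.Finite R W] {ψ : W →ₗ[R] Dual R V} (hψ : Function.Surjective ψ) :
    finrank R (symmetricComp ψ) + (finrank R V).choose 2 = finrank R V * finrank R W := by
  have hsurj : Function.Surjective (ψ.compRight R : (V →ₗ[R] W) →ₗ[R] BilinForm R V) :=
    hψ.surjective_linearMapComp_left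
  have hcodim : finrank R (symmetricComp ψ) + finrank R V * finrank R V =
      (finrank R V + 1).choose 2 + finrank R V * finrank R W := by
    have := finrank_comap_add_finrank_of_surjective (N := V →ₗ[R] Dual R V) hsurj
      (symmetricForms R V)
    rwa [← symmetricComp, finrank_symmetricForms, finrank_linearMap, finrank_linearMap,
      finrank_linearMap, finrank_self, mul_one] at this
  rw [← choose_two_add_succ_choose_two] at hcodim
  lia

end SymmetricComp

theorem statement8_general (R : Type*) [CommRing R] [IsDomain R]
    (V W : Type*) [AddCommGroup V] [Module R V] [AddCommGroup W] [Module R W]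
    [Module.Free R V] [Module.Finite R V] [Module.Free R W] [Module.Finite R W]
    (k n : ℕ) (hk : finrank R V = k) (hn : finrank R W = n)
    (ψ : W →ₗ[R] Module.Dual R V) (hψ : Function.Surjective ψ) :
    ∃ S : Submodule R (V →ₗ[R] W),
      (S : Set (V →ₗ[R] W)) =
        {φ : V →ₗ[R] W | ∀ v₁ v₂ : V, ψ (φ v₁) v₂ = ψ (φ v₂) v₁} ∧
      finrank R S = k * n - k * (k - 1) / 2 := by
  refine ⟨symmetricComp ψ, Set.ext fun _ ↦ mem_symmetricComp, ?_⟩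
  rw [← hk, ← hn, ← finrank_symmetricComp_add_choose hψ, ← Nat.choose_two_right,
    Nat.add_sub_cancel]

/-- Let `V, W` be finite-dimensional vector spaces over a
field `F` with `dim V = k`, `dim W = n`, and let `ψ : W → V*` be a surjective
linear map.  Then the set `{φ : V →ₗ W | ψ ∘ φ is symmetric}` is a linear
subspace of `Hom(V, W)` of dimension `k * n - k * (k - 1) / 2`. -/
theorem statement8 (F : Type*) [Field F]
    (V W : Type*) [AddCommGroup V] [Module F V] [AddCommGroup W] [Module F W]
    [FiniteDimensional F V] [FiniteDimensional F W]
    (k n : ℕ) (hk : finrank F V = k) (hn : finrank F W = n)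
    (ψ : W →ₗ[F] Module.Dual F V) (hψ : Function.Surjective ψ) :
    ∃ S : Submodule F (V →ₗ[F] W),
      (S : Set (V →ₗ[F] W)) =
        {φ : V →ₗ[F] W | ∀ v₁ v₂ : V, ψ (φ v₁) v₂ = ψ (φ v₂) v₁} ∧
      finrank F S = k * n - k * (k - 1) / 2 :=
  statement8_general F V W k n hk hn ψ hψ
end

section
/- Let F be a field and let k ≤ n be positive integers. Let A be a k×n matrix over F in generalized Jordan normal form, with diagonal entries λ₁, …, λ_k and superdiagonal entries ε₁, …, ε_{k−1} ∈ {0,1} (conventions ε₀ = ε_k = 0). Suppose there exist scalars c_{i,j}, c′_{i,j} ∈ F for 1 ≤ i < j ≤ k such that for every n×k matrix B over F one has Σ_{i<j} c_{i,j}(B_{i,j} − B_{j,i}) = Σ_{i<j} c′_{i,j}((AB)_{i,j} − (AB)_{j,i}). Then, with the conventions c′_{a,a} = 0 and c′_{0,b} = 0: (1) for all 1 ≤ a < b ≤ k, c_{a,b} = c′_{a,b}·λ_a + c′_{a−1,b}·ε_{a−1} and c_{a,b} = c′_{a,b}·λ_b + c′_{a,b−1}·ε_{b−1}; and (2) for all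 1 ≤ a < k, c′_{a,a+1}·ε_a = 0. -/
/-!
A sum `∑_{i<j} c_{i,j} (M_{i,j} - M_{j,i})` is the entrywise pairing of `M` with the skew-symmetric
matrix `C` whose part above the diagonal is `c`. The hypothesis therefore says that `C` and `Aᵀ C'`
have the same pairing with every `B`; testing on the matrix units `B = E_{p,q}` gives
`C_{p,q} = ∑_i C'_{i,q} A_{i,p} = C'_{p,q} λ_p + C'_{p-1,q} ε_{p-1}`. The three conclusions are the
cases `(p, q) = (a, b)`, `(b, a)` and `(a + 1, a + 1)`.
-/

section SkewExtension

variable {ι R : Type*} [LinearOrder ι]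

/-- The skew-symmetric matrix with the entries of `c` above the diagonal. The values of `c` on and
below the diagonal are ignored. -/
def skewExtension [AddGroup R] (c : ι → ι → R) (i j : ι) : R :=
  (if i < j then c i j else 0) - (if j < i then c j i else 0)

theorem skewExtension_swap [AddGroup R] (c : ι → ι → R) (i j : ι) :
    skewExtension c j i = -skewExtension c i j :=
  (neg_sub _ _).symm

theorem skewExtension_self [AddGroup R] (c : ι → ι → R) (i : ι) : skewExtension c i i = 0 :=
  sub_self _

theorem skewExtension_of_lt [AddGroup R] (c : ι → ι → R) {i j : ι} (hij : i < j) :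
    skewExtension c i j = c i j := by
  simp [skewExtension, hij, hij.not_gt]

theorem skewExtension_of_le [AddGroup R] {c : ι → ι → R} {i j : ι} (hi : c i i = 0)
    (hij : i ≤ j) : skewExtension c i j = c i j := by
  rcases hij.eq_or_lt with rfl | hlt
  · rw [skewExtension_self, hi]
  · exact skewExtension_of_lt c hlt

theorem sum_lt_mul_sub_eq_sum_skewExtension_mul [NonUnitalNonAssocRing R] (s : Finset ι)
    (c M : ι → ι → R) :
    ∑ i ∈ s, ∑ j ∈ s with i < j, c i j * (M i j - M j i)
      = ∑ i ∈ s, ∑ j ∈ s, skewExtension c i j * M i j := by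
  simp only [skewExtension, mul_sub, sub_mul, ite_mul, zero_mul, Finset.sum_sub_distrib]
  simp only [Finset.sum_filter]
  rw [Finset.sum_comm (f := fun i j => if i < j then c i j * M j i else 0)]

theorem sum_Icc_mul_sub_eq_sum_skewExtension_mul [NonUnitalNonAssocRing R] (m k : ℕ)
    (c M : ℕ → ℕ → R) :
    ∑ i ∈ Finset.Icc m k, ∑ j ∈ Finset.Icc (i + 1) k, c i j * (M i j - M j i)
      = ∑ i ∈ Finset.Icc m k, ∑ j ∈ Finset.Icc m k, skewExtension c i j * M i j := by
  rw [← sum_lt_mul_sub_eq_sum_skewExtension_mul]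
  refine Finset.sum_congr rfl fun i hi => Finset.sum_congr ?_ fun _ _ => rfl
  ext j
  simp only [Finset.mem_Icc, Finset.mem_filter] at hi ⊢
  omega

end SkewExtension

theorem apply_eq_sum_mul_of_forall_sum_mul_eq {ι κ μ R : Type*} [NonAssocSemiring R]
    {r : Finset ι} {s t : Finset κ} {u : Finset μ} {C : κ → μ → R} {C' : ι → μ → R}
    {A : ι → κ → R}
    (h : ∀ B : κ → μ → R, ∑ i ∈ s, ∑ j ∈ u, C i j * B i j
      = ∑ i ∈ r, ∑ j ∈ u, C' i j * ∑ l ∈ t, A i l * B l j)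
    {p : κ} (hps : p ∈ s) (hpt : p ∈ t) {q : μ} (hq : q ∈ u) :
    C p q = ∑ i ∈ r, C' i q * A i p := by
  classical
  simpa [Pi.single_apply, apply_ite, ite_apply, hps, hpt, hq] using
    h (Pi.single p (Pi.single q 1))

section Bidiagonal

variable {R : Type*}

/-- The leftmost `k × k` block of `A`, with indices starting at `1`, is upper bidiagonal with
diagonal `lam` and superdiagonal `eps`, extended by `eps 0 = 0`. Jordan matrices are the case where
`eps` takes values in `{0, 1}` and `lam` is constant on blocks. -/
structure IsUpperBidiagonal [Zero R] (k : ℕ) (A : ℕ → ℕ → R) (lam eps : ℕ → R) : Prop where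
  diag : ∀ i, 1 ≤ i → i ≤ k → lam i = A i i
  superdiag : ∀ i, 1 ≤ i → i < k → eps i = A i (i + 1)
  superdiag_zero : eps 0 = 0
  apply_eq_zero : ∀ i j, 1 ≤ i → i ≤ k → 1 ≤ j → j ≤ k → j ≠ i → j ≠ i + 1 → A i j = 0

namespace IsUpperBidiagonal

variable {k : ℕ} {A : ℕ → ℕ → R} {lam eps : ℕ → R}

theorem apply_eq [AddZeroClass R] (hA : IsUpperBidiagonal k A lam eps) {i p : ℕ}
    (hi : i ∈ Finset.Icc 1 k) (hp : p ∈ Finset.Icc 1 k) :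
    A i p = (if i = p then lam p else 0) + (if i = p - 1 then eps (p - 1) else 0) := by
  rw [Finset.mem_Icc] at hi hp
  by_cases hdiag : i = p
  · rw [if_pos hdiag, if_neg (by omega), add_zero, hdiag, hA.diag p hp.1 hp.2]
  by_cases hsuper : i = p - 1
  · rw [if_neg hdiag, if_pos hsuper, zero_add, ← hsuper, hA.superdiag i hi.1 (by omega),
      show i + 1 = p by omega]
  · rw [if_neg hdiag, if_neg hsuper, add_zero,
      hA.apply_eq_zero i p hi.1 hi.2 hp.1 hp.2 (Ne.symm hdiag) (by omega)]

theorem sum_mul_apply [NonUnitalNonAssocSemiring R] (hA : IsUpperBidiagonal k A lam eps)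
    (g : ℕ → R) {p : ℕ} (hp : p ∈ Finset.Icc 1 k) :
    ∑ i ∈ Finset.Icc 1 k, g i * A i p = g p * lam p + g (p - 1) * eps (p - 1) := by
  have hboundary : p - 1 ∉ Finset.Icc 1 k → eps (p - 1) = 0 := fun hmem => by
    rw [Finset.mem_Icc] at hp hmem
    rw [show p - 1 = 0 by omega, hA.superdiag_zero]
  calc ∑ i ∈ Finset.Icc 1 k, g i * A i p
      = ∑ i ∈ Finset.Icc 1 k, ((if i = p then g i * lam p else 0)
          + (if i = p - 1 then g i * eps (p - 1) else 0)) :=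
        Finset.sum_congr rfl fun i hi => by
          rw [hA.apply_eq hi hp, mul_add, mul_ite_zero, mul_ite_zero]
    _ = g p * lam p + g (p - 1) * eps (p - 1) := by
        rw [Finset.sum_add_distrib, Finset.sum_ite_eq', Finset.sum_ite_eq', if_pos hp,
          ite_eq_left_iff.2 fun hmem => by rw [hboundary hmem, mul_zero]]

theorem skewExtension_eq [NonAssocRing R] (hA : IsUpperBidiagonal k A lam eps) {n : ℕ}
    (hkn : k ≤ n) {c c' : ℕ → ℕ → R}
    (hident : ∀ B : ℕ → ℕ → R,
      ∑ i ∈ Finset.Icc 1 k, ∑ j ∈ Finset.Icc (i + 1) k, c i j * (B i j - B j i)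
      = ∑ i ∈ Finset.Icc 1 k, ∑ j ∈ Finset.Icc (i + 1) k,
          c' i j * ((∑ l ∈ Finset.Icc 1 n, A i l * B l j)
            - (∑ l ∈ Finset.Icc 1 n, A j l * B l i)))
    {p q : ℕ} (hp : p ∈ Finset.Icc 1 k) (hq : q ∈ Finset.Icc 1 k) :
    skewExtension c p q
      = skewExtension c' p q * lam p + skewExtension c' (p - 1) q * eps (p - 1) := by
  rw [← hA.sum_mul_apply (skewExtension c' · q) hp]
  refine apply_eq_sum_mul_of_forall_sum_mul_eq (fun B => ?_) hp
    (Finset.Icc_subset_Icc_right hkn hp) hq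
  rw [← sum_Icc_mul_sub_eq_sum_skewExtension_mul, hident B]
  exact sum_Icc_mul_sub_eq_sum_skewExtension_mul 1 k c' fun i j =>
    ∑ l ∈ Finset.Icc 1 n, A i l * B l j

end IsUpperBidiagonal

end Bidiagonal

theorem statement10_general {R : Type*} [NonAssocRing R] {k n : ℕ} (hkn : k ≤ n)
    {A : ℕ → ℕ → R} {lam eps : ℕ → R} (hA : IsUpperBidiagonal k A lam eps)
    {c c' : ℕ → ℕ → R} (hc'diag : ∀ a, c' a a = 0)
    (hident : ∀ B : ℕ → ℕ → R,
      ∑ i ∈ Finset.Icc 1 k, ∑ j ∈ Finset.Icc (i + 1) k, c i j * (B i j - B j i)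
      = ∑ i ∈ Finset.Icc 1 k, ∑ j ∈ Finset.Icc (i + 1) k,
          c' i j * ((∑ l ∈ Finset.Icc 1 n, A i l * B l j)
            - (∑ l ∈ Finset.Icc 1 n, A j l * B l i))) :
    (∀ a b, 1 ≤ a → a < b → b ≤ k →
      c a b = c' a b * lam a + c' (a - 1) b * eps (a - 1) ∧
      c a b = c' a b * lam b + c' a (b - 1) * eps (b - 1)) ∧
    (∀ a, 1 ≤ a → a < k → c' a (a + 1) * eps a = 0) := by
  refine ⟨fun a b ha hab hb => ?_, fun a _ hak => ?_⟩
  · have hamem : a ∈ Finset.Icc 1 k := Finset.mem_Icc.2 ⟨ha, hab.le.trans hb⟩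
    have hbmem : b ∈ Finset.Icc 1 k := Finset.mem_Icc.2 ⟨ha.trans hab.le, hb⟩
    constructor
    · have hentry := hA.skewExtension_eq hkn hident hamem hbmem
      rwa [skewExtension_of_lt c hab, skewExtension_of_lt c' hab,
        skewExtension_of_lt c' (by omega : a - 1 < b)] at hentry
    · have hentry := hA.skewExtension_eq hkn hident hbmem hamem
      rwa [skewExtension_swap c a b, skewExtension_swap c' a b, skewExtension_swap c' a (b - 1),
        skewExtension_of_lt c hab, skewExtension_of_lt c' hab,
        skewExtension_of_le (hc'diag a) (Nat.le_sub_one_of_lt hab),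
        neg_mul, neg_mul, ← neg_add, neg_inj] at hentry
  · have hmem : a + 1 ∈ Finset.Icc 1 k := Finset.mem_Icc.2 ⟨a.succ_pos, hak⟩
    have hentry := hA.skewExtension_eq hkn hident hmem hmem
    rw [skewExtension_self, skewExtension_self, zero_mul, zero_add, Nat.add_sub_cancel,
      skewExtension_of_lt c' a.lt_succ_self] at hentry
    exact hentry.symm

/-- (Equations (mess) and (no-mess) in the proof of
Lemma `technical-first` of Osserman.)  Let `A` be a `k × n` matrix over a
field `F` (indexed by `{1, …, k} × {1, …, n}`) in generalized Jordan normal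
form, with diagonal entries `λ₁, …, λ_k` and superdiagonal entries
`ε₁, …, ε_{k-1} ∈ {0, 1}` (conventions `ε₀ = ε_k = 0`).  Suppose scalars
`c_{i,j}, c'_{i,j}` (`1 ≤ i < j ≤ k`) satisfy, for every `n × k` matrix `B`,
`∑_{i<j} c_{i,j}(B_{i,j} - B_{j,i}) = ∑_{i<j} c'_{i,j}((AB)_{i,j} - (AB)_{j,i})`.
Then (with the conventions `c'_{a,a} = 0`, `c'_{0,b} = 0`):
(1) for `1 ≤ a < b ≤ k`, `c_{a,b} = c'_{a,b} λ_a + c'_{a-1,b} ε_{a-1}` and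
`c_{a,b} = c'_{a,b} λ_b + c'_{a,b-1} ε_{b-1}`; and
(2) for `1 ≤ a < k`, `c'_{a,a+1} ε_a = 0`. -/
theorem statement10 (F : Type*) [Field F] (k n : ℕ) (hk : 1 ≤ k) (hkn : k ≤ n)
    (A : ℕ → ℕ → F) (lam eps : ℕ → F)
    (hlam : ∀ i, 1 ≤ i → i ≤ k → lam i = A i i)
    (heps : ∀ i, 1 ≤ i → i < k → eps i = A i (i + 1))
    (heps0 : eps 0 = 0) (hepsk : eps k = 0)
    (heps01 : ∀ i, 1 ≤ i → i < k → eps i = 0 ∨ eps i = 1)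
    (hAzero : ∀ i j, 1 ≤ i → i ≤ k → 1 ≤ j → j ≤ k → j ≠ i → j ≠ i + 1 →
      A i j = 0)
    (hblock : ∀ i, 1 ≤ i → i < k → eps i = 1 → lam (i + 1) = lam i)
    (c c' : ℕ → ℕ → F)
    (hc'diag : ∀ a, c' a a = 0) (hc'zero : ∀ b, c' 0 b = 0)
    (hident : ∀ B : ℕ → ℕ → F,
      ∑ i ∈ Finset.Icc 1 k, ∑ j ∈ Finset.Icc (i + 1) k,
        c i j * (B i j - B j i)
      = ∑ i ∈ Finset.Icc 1 k, ∑ j ∈ Finset.Icc (i + 1) k,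
          c' i j * ((∑ l ∈ Finset.Icc 1 n, A i l * B l j)
            - (∑ l ∈ Finset.Icc 1 n, A j l * B l i))) :
    (∀ a b, 1 ≤ a → a < b → b ≤ k →
      c a b = c' a b * lam a + c' (a - 1) b * eps (a - 1) ∧
      c a b = c' a b * lam b + c' a (b - 1) * eps (b - 1)) ∧
    (∀ a, 1 ≤ a → a < k → c' a (a + 1) * eps a = 0) := by
  exact statement10_general hkn ⟨hlam, heps, heps0, hAzero⟩ hc'diag hident
end

section
/- Let F be a field and let k ≤ n be positive integers. Let A be a k×n matrix over F in generalized Jordan normal form, with diagonal entries λ₁, …, λ_k and superdiagonal entries ε₁, …, ε_{k−1} ∈ {0,1}. Suppose there exist scalars c_{i,j}, c′_{i,j} ∈ F for 1 ≤ i < j ≤ k such that for every n×k matrix B over F one has Σ_{i<j} c_{i,j}(B_{i,j} − B_{j,i}) = Σ_{i<j} c′_{i,j}((AB)_{i,j} − (AB)_{j,i}). If i < j are indices lying in the same Jordan block of A, i.e. ε_i = ε_{i+1} = ⋯ = ε_{j−1} = 1, then c′_{i,j} = 0. -/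
/-!
Fix `i < j` in one Jordan block with eigenvalue `a`, and let `B` be the symmetric matrix which
reverses the coordinates `i + 1, …, j` and vanishes elsewhere. As `B` is symmetric, every
combination of the `B i j - B j i` is zero. Since `A` acts on these coordinates by a Jordan block,
`A * B` is `a • B` plus `B` with its rows moved up by one. The first summand is symmetric, and the
second has its ones at the positions `(r, m)` with `r + m = i + j` and `i ≤ r < j`, which swapping
`r` and `m` preserves except at `(i, j)`. Hence the identity for this `B` reads `0 = c' i j`.
-/

section Entries

variable {R : Type*} [Zero R] [One R]

/-- The `(r, p)` entry of the infinite Jordan block with eigenvalue `a`. A matrix has a finite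
Jordan block at the indices `i, …, j` when its columns `i + 1, …, j` agree with those of this one;
column `i` is left free because it may carry a superdiagonal entry in row `i - 1`. -/
def jordanBlock (a : R) (r p : ℕ) : R :=
  if r = p then a else if r + 1 = p then 1 else 0

/-- The `(l, m)` entry of the matrix which reverses the order of the coordinates `i + 1, …, j` and
is zero elsewhere; the upper bounds `l ≤ j` and `m ≤ j` are implied by the condition on `l + m`. -/
def blockReversal (R : Type*) [Zero R] [One R] (i j l m : ℕ) : R :=
  if i < l ∧ i < m ∧ l + m = i + j + 1 then 1 else 0

lemma blockReversal_comm (i j l m : ℕ) : blockReversal R i j l m = blockReversal R i j m l := by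
  unfold blockReversal
  exact if_congr (by omega) rfl rfl

lemma eq_jordanBlock_of_superdiag_eq_one {A : ℕ → ℕ → R} {lam eps : ℕ → R} {k i j : ℕ}
    (hi : 1 ≤ i) (hj : j ≤ k)
    (hlam : ∀ l, 1 ≤ l → l ≤ k → lam l = A l l)
    (heps : ∀ l, 1 ≤ l → l < k → eps l = A l (l + 1))
    (hzero : ∀ r p, 1 ≤ r → r ≤ k → 1 ≤ p → p ≤ k → p ≠ r → p ≠ r + 1 → A r p = 0)
    (hblock : ∀ l, 1 ≤ l → l < k → eps l = 1 → lam (l + 1) = lam l)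
    (hone : ∀ l, i ≤ l → l < j → eps l = 1) :
    ∀ r ∈ Finset.Icc 1 k, ∀ p ∈ Finset.Ioc i j, A r p = jordanBlock (lam i) r p := by
  have hconst : ∀ p, i ≤ p → p ≤ j → lam p = lam i := by
    intro p hip
    induction p, hip using Nat.le_induction with
    | base => exact fun _ => rfl
    | succ l hil ih =>
      exact fun hlj => (hblock l (by omega) (by omega) (hone l hil hlj)).trans (ih (by omega))
  intro r hr p hp
  rw [Finset.mem_Icc] at hr
  rw [Finset.mem_Ioc] at hp
  unfold jordanBlock
  split_ifs with hrp hrp'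
  · subst hrp
    rw [← hlam r hr.1 hr.2, hconst r hp.1.le hp.2]
  · subst hrp'
    rw [← heps r hr.1 (by omega), hone r (by omega) (by omega)]
  · exact hzero r p hr.1 hr.2 (by omega) (by omega) (Ne.symm hrp) (Ne.symm hrp')

end Entries

lemma blockReversal_succ_sub_swap {R : Type*} [AddGroupWithOne R] {i j r m : ℕ} (hrm : r < m) :
    blockReversal R i j (r + 1) m - blockReversal R i j (m + 1) r =
      if r = i ∧ m = j then 1 else 0 := by
  unfold blockReversal
  split_ifs <;> first | omega | simp

section Semiring

variable {R : Type*} [NonAssocSemiring R]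

lemma sum_mul_blockReversal {i j : ℕ} {s : Finset ℕ} (hs : Finset.Ioc i j ⊆ s) (f : ℕ → R)
    (m : ℕ) :
    ∑ l ∈ s, f l * blockReversal R i j l m =
      if m ∈ Finset.Ioc i j then f (i + j + 1 - m) else 0 := by
  simp only [Finset.mem_Ioc]
  split_ifs with hm
  · have hmem : i + j + 1 - m ∈ s := hs (Finset.mem_Ioc.2 (by omega))
    rw [Finset.sum_eq_single_of_mem _ hmem fun l _ hl => ?_, blockReversal, if_pos (by omega),
      mul_one]
    rw [blockReversal, if_neg (by omega), mul_zero]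
  · refine Finset.sum_eq_zero fun l _ => ?_
    rw [blockReversal, if_neg (by omega), mul_zero]

lemma sum_mul_blockReversal_of_eq_jordanBlock {i j r : ℕ} {s : Finset ℕ}
    (hs : Finset.Ioc i j ⊆ s) {a : R} {f : ℕ → R}
    (hf : ∀ p ∈ Finset.Ioc i j, f p = jordanBlock a r p) (m : ℕ) :
    ∑ l ∈ s, f l * blockReversal R i j l m =
      a * blockReversal R i j r m + blockReversal R i j (r + 1) m := by
  rw [sum_mul_blockReversal hs]
  split_ifs with hm <;> rw [Finset.mem_Ioc] at hm
  · rw [hf _ (Finset.mem_Ioc.2 (by omega))]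
    unfold jordanBlock blockReversal
    split_ifs <;> first | omega | simp
  · unfold blockReversal
    rw [if_neg (by omega), if_neg (by omega), mul_zero, add_zero]

end Semiring

theorem statement11_general {R : Type*} [NonAssocRing R] {k n i j : ℕ} (hkn : k ≤ n)
    (hi : 1 ≤ i) (hij : i < j) (hj : j ≤ k)
    {A : ℕ → ℕ → R} {a : R}
    (hA : ∀ r ∈ Finset.Icc 1 k, ∀ p ∈ Finset.Ioc i j, A r p = jordanBlock a r p)
    {c : ℕ → ℕ → R}
    (hident : ∀ B : ℕ → ℕ → R, (∀ l m, B l m = B m l) →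
      ∑ r ∈ Finset.Icc 1 k, ∑ m ∈ Finset.Icc (r + 1) k,
        c r m * ((∑ l ∈ Finset.Icc 1 n, A r l * B l m)
          - (∑ l ∈ Finset.Icc 1 n, A m l * B l r)) = 0) :
    c i j = 0 := by
  have hs : Finset.Ioc i j ⊆ Finset.Icc 1 n := fun l hl => by
    rw [Finset.mem_Ioc] at hl
    exact Finset.mem_Icc.2 (by omega)
  have hsub : ∀ r ∈ Finset.Icc 1 k, ∀ m ∈ Finset.Icc (r + 1) k,
      (∑ l ∈ Finset.Icc 1 n, A r l * blockReversal R i j l m)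
        - (∑ l ∈ Finset.Icc 1 n, A m l * blockReversal R i j l r) =
      if r = i ∧ m = j then 1 else 0 := by
    intro r hr m hm
    rw [Finset.mem_Icc] at hm
    have hm' : m ∈ Finset.Icc 1 k := Finset.mem_Icc.2 (by omega)
    rw [sum_mul_blockReversal_of_eq_jordanBlock hs (hA r hr),
      sum_mul_blockReversal_of_eq_jordanBlock hs (hA m hm'), blockReversal_comm i j m r,
      add_sub_add_left_eq_sub, blockReversal_succ_sub_swap hm.1]
  calc c i j
      = ∑ r ∈ Finset.Icc 1 k, ∑ m ∈ Finset.Icc (r + 1) k,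
          c r m * (if r = i ∧ m = j then 1 else 0) := by
        rw [Finset.sum_eq_single_of_mem i (Finset.mem_Icc.2 (by omega)) (by simp +contextual),
          Finset.sum_eq_single_of_mem j (Finset.mem_Icc.2 (by omega)) (by simp +contextual)]
        simp
    _ = ∑ r ∈ Finset.Icc 1 k, ∑ m ∈ Finset.Icc (r + 1) k,
          c r m * ((∑ l ∈ Finset.Icc 1 n, A r l * blockReversal R i j l m)
            - (∑ l ∈ Finset.Icc 1 n, A m l * blockReversal R i j l r)) :=
        Finset.sum_congr rfl fun r hr => Finset.sum_congr rfl fun m hm => by rw [hsub r hr m hm]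
    _ = 0 := hident _ (blockReversal_comm i j)

/-- (Part (i) of Lemma `technical-first` of Osserman.)
Let `A` be a `k × n` matrix over a field `F` (indexed by
`{1, …, k} × {1, …, n}`) in generalized Jordan normal form, with diagonal
entries `λ₁, …, λ_k` and superdiagonal entries `ε₁, …, ε_{k-1} ∈ {0, 1}`
(conventions `ε₀ = ε_k = 0`).  Suppose scalars `c_{i,j}, c'_{i,j}`
(`1 ≤ i < j ≤ k`) satisfy, for every `n × k` matrix `B`,
`∑_{i<j} c_{i,j}(B_{i,j} - B_{j,i}) = ∑_{i<j} c'_{i,j}((AB)_{i,j} - (AB)_{j,i})`.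
If `i < j` lie in the same Jordan block of `A`, i.e.
`ε_i = ε_{i+1} = ⋯ = ε_{j-1} = 1`, then `c'_{i,j} = 0`. -/
theorem statement11 (F : Type*) [Field F] (k n : ℕ) (hk : 1 ≤ k) (hkn : k ≤ n)
    (A : ℕ → ℕ → F) (lam eps : ℕ → F)
    (hlam : ∀ i, 1 ≤ i → i ≤ k → lam i = A i i)
    (heps : ∀ i, 1 ≤ i → i < k → eps i = A i (i + 1))
    (heps0 : eps 0 = 0) (hepsk : eps k = 0)
    (heps01 : ∀ i, 1 ≤ i → i < k → eps i = 0 ∨ eps i = 1)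
    (hAzero : ∀ i j, 1 ≤ i → i ≤ k → 1 ≤ j → j ≤ k → j ≠ i → j ≠ i + 1 →
      A i j = 0)
    (hblock : ∀ i, 1 ≤ i → i < k → eps i = 1 → lam (i + 1) = lam i)
    (c c' : ℕ → ℕ → F)
    (hident : ∀ B : ℕ → ℕ → F,
      ∑ i ∈ Finset.Icc 1 k, ∑ j ∈ Finset.Icc (i + 1) k,
        c i j * (B i j - B j i)
      = ∑ i ∈ Finset.Icc 1 k, ∑ j ∈ Finset.Icc (i + 1) k,
          c' i j * ((∑ l ∈ Finset.Icc 1 n, A i l * B l j)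
            - (∑ l ∈ Finset.Icc 1 n, A j l * B l i))) :
    ∀ i j, 1 ≤ i → i < j → j ≤ k → (∀ l, i ≤ l → l < j → eps l = 1) →
      c' i j = 0 := by
  intro i j hi hij hj hone
  exact statement11_general hkn hi hij hj
    (eq_jordanBlock_of_superdiag_eq_one hi hj hlam heps hAzero hblock hone) fun B hB =>
    (hident B).symm.trans (by simp [fun l m => sub_eq_zero.2 (hB l m)])
end

section
/- Let F be a field and let k ≤ n be positive integers. Let A be a k×n matrix over F in generalized Jordan normal form, with diagonal entries λ₁, …, λ_k and superdiagonal entries ε₁, …, ε_{k−1} ∈ {0,1} (conventions ε₀ = ε_k = 0). Suppose there exist scalars c_{i,j}, c′_{i,j} ∈ F for 1 ≤ i < j ≤ k such that for every n×k matrix B over F one has Σ_{i<j} c_{i,j}(B_{i,j} − B_{j,i}) = Σ_{i<j} c′_{i,j}((AB)_{i,j} − (AB)_{j,i}). If i < j and c′_{i,j} ≠ 0, then: (a) if ε_i = 1, then ε_{j−1} = 1 and c′_{i+1,j−1} = c′_{i,j}; and (b) if ε_j = 1, then ε_{i−1} = 1 and c′_{i−1,j+1} = c′_{i,j}. -/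
/-!
Let `J` be the leftmost `k × k` block of `A` and let `C = (c'_{i,j})`, a skew-symmetric matrix. The
left side of the identity vanishes when `B` is symmetric; testing on `B = E_{l,m} + E_{m,l}` shows
that `Cᵀ J` is skew-symmetric, that is, `C J = Jᵀ C`. Comparing entries of this relation, an
induction on `l + m` gives `c'_{l,m} = 0` whenever `λ_l ≠ λ_m`, and where `λ_l = λ_m` what is left
of it is `c'_{l-1,m} ε_{l-1} = c'_{l,m-1} ε_{m-1}`, which moves a nonzero entry along its
antidiagonal. The relation is invariant under transposing `C`, so (b) is (a) for `Cᵀ`.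
-/

open Finset

section Sums

theorem sum_sum_filter_lt_add_swap {ι M : Type*} [LinearOrder ι] [AddCommMonoid M]
    (s : Finset ι) (f : ι → ι → M) (hf : ∀ i, f i i = 0) :
    ∑ i ∈ s, ∑ j ∈ s with i < j, (f i j + f j i) = ∑ i ∈ s, ∑ j ∈ s, f i j := by
  simp only [sum_add_distrib, sum_filter]
  rw [sum_comm (f := fun i j => if i < j then f j i else 0)]
  simp only [← sum_add_distrib]
  refine sum_congr rfl fun i _ => sum_congr rfl fun j _ => ?_
  rcases lt_trichotomy i j with h | rfl | h
  · simp [h, h.not_gt]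
  · simp [hf]
  · simp [h, h.not_gt]

theorem sum_sum_Icc_succ_mul_sub_swap {R : Type*} [NonUnitalNonAssocRing R] (k : ℕ)
    {c : ℕ → ℕ → R} (hdiag : ∀ a, c a a = 0) (hanti : ∀ a b, a < b → c b a = -c a b)
    (f : ℕ → ℕ → R) :
    ∑ i ∈ Icc 1 k, ∑ j ∈ Icc (i + 1) k, c i j * (f i j - f j i)
      = ∑ i ∈ Icc 1 k, ∑ j ∈ Icc 1 k, c i j * f i j := by
  rw [← sum_sum_filter_lt_add_swap (Icc 1 k) (fun i j => c i j * f i j) (by simp [hdiag])]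
  refine sum_congr rfl fun i _ => ?_
  have hfilter : Icc (i + 1) k = {j ∈ Icc 1 k | i < j} := by
    ext j
    simp only [mem_Icc, mem_filter]
    omega
  rw [hfilter]
  refine sum_congr rfl fun j hj => ?_
  rw [hanti i j (mem_filter.mp hj).2, mul_sub, neg_mul, sub_eq_add_neg]

theorem sum_sum_mul_sum_mul_comm {ι κ R : Type*} [NonUnitalSemiring R] (s : Finset ι)
    (t : Finset κ) (c : ι → ι → R) (A : ι → κ → R) (B : κ → ι → R) :
    ∑ a ∈ s, ∑ b ∈ s, c a b * ∑ x ∈ t, A a x * B x b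
      = ∑ x ∈ t, ∑ b ∈ s, (∑ a ∈ s, c a b * A a x) * B x b := by
  simp only [mul_sum, sum_mul, ← mul_assoc]
  rw [sum_comm_cycle]
  exact sum_congr rfl fun x _ => sum_comm

theorem add_swap_eq_zero_of_forall_symm {ι R : Type*} [NonAssocSemiring R]
    {s t : Finset ι} {G : ι → ι → R}
    (hG : ∀ B : ι → ι → R, (∀ x y, B x y = B y x) → ∑ x ∈ t, ∑ y ∈ s, G x y * B x y = 0)
    (hst : s ⊆ t) {l m : ι} (hl : l ∈ s) (hm : m ∈ s) : G l m + G m l = 0 := by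
  classical
  simpa [ite_and, mul_add, sum_add_distrib, hl, hm, hst hl, hst hm] using
    hG (fun x y => (if x = l ∧ y = m then 1 else 0) + (if x = m ∧ y = l then 1 else 0))
      fun x y => by rw [add_comm]; simp only [and_comm]

end Sums

section Bidiagonal

/-- The leftmost `k × k` block of `A`, with rows and columns numbered from `1`, is upper bidiagonal
with diagonal `lam 1, …, lam k` and superdiagonal `eps 1, …, eps (k - 1)`. -/
structure IsUpperBidiagonal_s12 {R : Type*} [Zero R] (k : ℕ) (A : ℕ → ℕ → R) (lam eps : ℕ → R) :
    Prop where
  diag : ∀ i, 1 ≤ i → i ≤ k → lam i = A i i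
  superdiag : ∀ i, 1 ≤ i → i < k → eps i = A i (i + 1)
  eq_zero : ∀ i j, 1 ≤ i → i ≤ k → 1 ≤ j → j ≤ k → j ≠ i → j ≠ i + 1 → A i j = 0

theorem IsUpperBidiagonal_s12.sum_mul_apply {R : Type*} [NonUnitalNonAssocSemiring R] {k : ℕ}
    {A : ℕ → ℕ → R} {lam eps : ℕ → R} (hA : IsUpperBidiagonal_s12 k A lam eps) (heps : eps 0 = 0)
    (v : ℕ → R) {l : ℕ} (hl : 1 ≤ l) (hlk : l ≤ k) :
    ∑ a ∈ Icc 1 k, v a * A a l = v l * lam l + v (l - 1) * eps (l - 1) := by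
  have hzero : ∀ a ∈ Icc 1 k, a ≠ l → a ≠ l - 1 → v a * A a l = 0 := fun a ha hal hal' => by
    rw [mem_Icc] at ha
    rw [hA.eq_zero a l ha.1 ha.2 hl hlk hal.symm (by omega), mul_zero]
  have hmem : l ∈ Icc 1 k := mem_Icc.mpr ⟨hl, hlk⟩
  obtain rfl | hl1 := hl.eq_or_lt
  · rw [sum_eq_single_of_mem 1 hmem fun a ha ha1 => hzero a ha ha1
      (by rw [mem_Icc] at ha; omega), hA.diag 1 hl hlk, Nat.sub_self, heps, mul_zero, add_zero]
  · rw [sum_eq_add_of_mem l (l - 1) hmem (mem_Icc.mpr (by omega)) (by omega)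
      fun a ha h => hzero a ha h.1 h.2, hA.diag l hl hlk,
      hA.superdiag (l - 1) (by omega) (by omega), Nat.sub_add_cancel hl]

/-- The entrywise form of `C * J = Jᵀ * C`, where `C = (c l m)` and `J` is the upper bidiagonal
`k × k` matrix with diagonal `lam` and superdiagonal `eps`. The entries of `J` stand to the right of
those of `C` on both sides, which is the form that survives over a noncommutative ring. It is meant
for `eps 0 = 0`, which removes the terms where an index is `0`. -/
def IntertwinesBidiagonal {R : Type*} [Mul R] [Add R] (k : ℕ) (lam eps : ℕ → R)
    (c : ℕ → ℕ → R) : Prop :=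
  ∀ l m, 1 ≤ l → l ≤ k → 1 ≤ m → m ≤ k →
    c l m * lam m + c l (m - 1) * eps (m - 1) = c l m * lam l + c (l - 1) m * eps (l - 1)

namespace IntertwinesBidiagonal

variable {R : Type*} [Mul R] {k : ℕ} {lam eps : ℕ → R} {c : ℕ → ℕ → R}

theorem swap [Add R] (hc : IntertwinesBidiagonal k lam eps c) :
    IntertwinesBidiagonal k lam eps (Function.swap c) :=
  fun l m hl hlk hm hmk => (hc m l hm hmk hl hlk).symm

theorem mul_eps_eq [Add R] [IsLeftCancelAdd R] (hc : IntertwinesBidiagonal k lam eps c) {l m : ℕ}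
    (hl : 1 ≤ l) (hlk : l ≤ k) (hm : 1 ≤ m) (hmk : m ≤ k) (hlam : lam l = lam m) :
    c (l - 1) m * eps (l - 1) = c l (m - 1) * eps (m - 1) := by
  have hrel := hc l m hl hlk hm hmk
  rw [hlam] at hrel
  exact (add_left_cancel hrel).symm

end IntertwinesBidiagonal

end Bidiagonal

section SkewPairing

/-- For every `n × k` matrix `B`, pairing the strictly upper triangular part of `c` with `B₀ - B₀ᵀ`,
where `B₀` is the top `k × k` block of `B`, gives the same result as pairing that of `c'` with
`A * B - (A * B)ᵀ`. -/
def SkewPairingsAgree {R : Type*} [NonUnitalNonAssocRing R] (k n : ℕ) (A c c' : ℕ → ℕ → R) :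
    Prop :=
  ∀ B : ℕ → ℕ → R,
    ∑ i ∈ Icc 1 k, ∑ j ∈ Icc (i + 1) k, c i j * (B i j - B j i)
      = ∑ i ∈ Icc 1 k, ∑ j ∈ Icc (i + 1) k,
          c' i j * ((∑ l ∈ Icc 1 n, A i l * B l j) - (∑ l ∈ Icc 1 n, A j l * B l i))

namespace SkewPairingsAgree

theorem sum_eq_zero_of_symm {R : Type*} [NonUnitalRing R] {k n : ℕ} {A c c' : ℕ → ℕ → R}
    (hident : SkewPairingsAgree k n A c c')
    (hdiag : ∀ a, c' a a = 0) (hanti : ∀ a b, a < b → c' b a = -c' a b)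
    (B : ℕ → ℕ → R) (hB : ∀ x y, B x y = B y x) :
    ∑ x ∈ Icc 1 n, ∑ b ∈ Icc 1 k, (∑ a ∈ Icc 1 k, c' a b * A a x) * B x b = 0 := by
  have hleft : ∑ i ∈ Icc 1 k, ∑ j ∈ Icc (i + 1) k, c i j * (B i j - B j i) = 0 :=
    sum_eq_zero fun i _ => sum_eq_zero fun j _ => by rw [hB i j, sub_self, mul_zero]
  rw [← sum_sum_mul_sum_mul_comm, ← sum_sum_Icc_succ_mul_sub_swap k hdiag hanti
    (fun i j => ∑ x ∈ Icc 1 n, A i x * B x j), ← hident B, hleft]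

theorem intertwinesBidiagonal {R : Type*} [Ring R] {k n : ℕ} {A c c' : ℕ → ℕ → R}
    {lam eps : ℕ → R} (hident : SkewPairingsAgree k n A c c') (hkn : k ≤ n)
    (hA : IsUpperBidiagonal_s12 k A lam eps) (heps : eps 0 = 0)
    (hdiag : ∀ a, c' a a = 0) (hanti : ∀ a b, a < b → c' b a = -c' a b) :
    IntertwinesBidiagonal k lam eps c' := by
  intro l m hl hlk hm hmk
  have hswap : ∀ a b, c' b a = -c' a b := fun a b => by
    rcases lt_trichotomy a b with h | rfl | h
    · exact hanti a b h
    · rw [hdiag, neg_zero]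
    · rw [hanti b a h, neg_neg]
  have hskew := add_swap_eq_zero_of_forall_symm (hident.sum_eq_zero_of_symm hdiag hanti)
    (Icc_subset_Icc_right hkn) (mem_Icc.mpr ⟨hl, hlk⟩) (mem_Icc.mpr ⟨hm, hmk⟩)
  rw [hA.sum_mul_apply heps (c' · m) hl hlk, hA.sum_mul_apply heps (c' · l) hm hmk,
    hswap l m, hswap l (m - 1), neg_mul, neg_mul, ← neg_add, add_neg_eq_zero] at hskew
  exact hskew.symm

end SkewPairingsAgree

end SkewPairing

section Jordan

/-- `lam 1, …, lam k` and `eps 1, …, eps (k - 1)` are the diagonal and the superdiagonal of a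
`k × k` matrix in Jordan normal form, with the conventions `eps 0 = eps k = 0`. -/
structure IsJordanData {R : Type*} [Zero R] [One R] (k : ℕ) (lam eps : ℕ → R) : Prop where
  eps_zero : eps 0 = 0
  eps_last : eps k = 0
  eps_eq_zero_or_one : ∀ i, 1 ≤ i → i < k → eps i = 0 ∨ eps i = 1
  lam_succ : ∀ i, 1 ≤ i → i < k → eps i = 1 → lam (i + 1) = lam i

namespace IsJordanData

section ZeroOne

variable {R : Type*} [Zero R] [One R] {k : ℕ} {lam eps : ℕ → R}

theorem eps_eq_one_of_ne_zero (hJ : IsJordanData k lam eps) {p : ℕ} (hpk : p ≤ k)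
    (hp : eps p ≠ 0) : 1 ≤ p ∧ p < k ∧ eps p = 1 := by
  have hp0 : p ≠ 0 := by rintro rfl; exact hp hJ.eps_zero
  have hpne : p ≠ k := by rintro rfl; exact hp hJ.eps_last
  have hpos : 1 ≤ p := Nat.one_le_iff_ne_zero.mpr hp0
  have hlt : p < k := hpk.lt_of_ne hpne
  exact ⟨hpos, hlt, (hJ.eps_eq_zero_or_one p hpos hlt).resolve_left hp⟩

theorem lam_pred (hJ : IsJordanData k lam eps) {l : ℕ} (hlk : l ≤ k) (hl : eps (l - 1) ≠ 0) :
    1 ≤ l - 1 ∧ lam (l - 1) = lam l := by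
  obtain ⟨hpos, hlt, hone⟩ := hJ.eps_eq_one_of_ne_zero ((l.sub_le 1).trans hlk) hl
  have hsucc := hJ.lam_succ (l - 1) hpos hlt hone
  rw [Nat.sub_add_cancel (by omega)] at hsucc
  exact ⟨hpos, hsucc.symm⟩

end ZeroOne

theorem eps_eq_one_and_eq_of_eq_mul_eps {R : Type*} [MulZeroOneClass R] {k : ℕ} {lam eps : ℕ → R}
    (hJ : IsJordanData k lam eps) {p : ℕ} (hpk : p ≤ k) {x y : R} (hx : x ≠ 0)
    (hxy : x = y * eps p) : eps p = 1 ∧ y = x := by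
  have hp : eps p ≠ 0 := fun h => hx (by rw [hxy, h, mul_zero])
  have hone := (hJ.eps_eq_one_of_ne_zero hpk hp).2.2
  exact ⟨hone, by rw [hxy, hone, mul_one]⟩

variable {R : Type*} [Ring R] [NoZeroDivisors R] {k : ℕ} {lam eps : ℕ → R} {c : ℕ → ℕ → R}

theorem apply_eq_zero_of_lam_ne (hJ : IsJordanData k lam eps)
    (hc : IntertwinesBidiagonal k lam eps c) {l m : ℕ} (hl : 1 ≤ l) (hlk : l ≤ k) (hm : 1 ≤ m)
    (hmk : m ≤ k) (hne : lam l ≠ lam m) : c l m = 0 := by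
  have hleft : c (l - 1) m * eps (l - 1) = 0 := by
    by_cases he : eps (l - 1) = 0
    · rw [he, mul_zero]
    · obtain ⟨hpos, hlam⟩ := hJ.lam_pred hlk he
      rw [hJ.apply_eq_zero_of_lam_ne hc hpos (by omega) hm hmk (by rwa [hlam]), zero_mul]
  have hright : c l (m - 1) * eps (m - 1) = 0 := by
    by_cases he : eps (m - 1) = 0
    · rw [he, mul_zero]
    · obtain ⟨hpos, hlam⟩ := hJ.lam_pred hmk he
      rw [hJ.apply_eq_zero_of_lam_ne hc hl hlk hpos (by omega) (by rwa [hlam]), zero_mul]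
  have hrel := hc l m hl hlk hm hmk
  rw [hleft, hright, add_zero, add_zero, ← sub_eq_zero, ← mul_sub] at hrel
  exact (mul_eq_zero.mp hrel).resolve_right (sub_ne_zero.mpr hne.symm)
termination_by l + m

theorem apply_succ_pred_eq (hJ : IsJordanData k lam eps) (hc : IntertwinesBidiagonal k lam eps c)
    {i j : ℕ} (hik : i ≤ k) (hj : 1 ≤ j) (hjk : j ≤ k) (hne : c i j ≠ 0) (he : eps i = 1) :
    eps (j - 1) = 1 ∧ c (i + 1) (j - 1) = c i j := by
  have : Nontrivial R := nontrivial_of_ne _ _ hne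
  obtain ⟨hi, hik', -⟩ := hJ.eps_eq_one_of_ne_zero hik (he ▸ one_ne_zero)
  have hlam : lam i = lam j :=
    not_imp_comm.mp (hJ.apply_eq_zero_of_lam_ne hc hi hik hj hjk) hne
  have hmove := hc.mul_eps_eq (l := i + 1) i.succ_pos hik' hj hjk
    ((hJ.lam_succ i hi hik' he).trans hlam)
  rw [Nat.add_sub_cancel, he, mul_one] at hmove
  exact hJ.eps_eq_one_and_eq_of_eq_mul_eps (by omega) hne hmove

end IsJordanData

end Jordan

theorem statement12_general {R : Type*} [Ring R] [NoZeroDivisors R] {k n : ℕ} (hkn : k ≤ n)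
    {A : ℕ → ℕ → R} {lam eps : ℕ → R} (hA : IsUpperBidiagonal_s12 k A lam eps)
    (hJ : IsJordanData k lam eps) {c c' : ℕ → ℕ → R}
    (hdiag : ∀ a, c' a a = 0) (hanti : ∀ a b, a < b → c' b a = -c' a b)
    (hident : SkewPairingsAgree k n A c c')
    {i j : ℕ} (hi : 1 ≤ i) (hik : i ≤ k) (hj : 1 ≤ j) (hjk : j ≤ k) (hne : c' i j ≠ 0) :
    (eps i = 1 → eps (j - 1) = 1 ∧ c' (i + 1) (j - 1) = c' i j) ∧
      (eps j = 1 → eps (i - 1) = 1 ∧ c' (i - 1) (j + 1) = c' i j) :=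
  have hc := hident.intertwinesBidiagonal hkn hA hJ.eps_zero hdiag hanti
  ⟨hJ.apply_succ_pred_eq hc hik hj hjk hne, hJ.apply_succ_pred_eq hc.swap hjk hi hik hne⟩

/-- (Part (iii) of Lemma `technical-first` of Osserman,
antidiagonal propagation.)  Let `A` be a `k × n` matrix over a field `F`
(indexed by `{1, …, k} × {1, …, n}`) in generalized Jordan normal form, with
diagonal entries `λ₁, …, λ_k` and superdiagonal entries
`ε₁, …, ε_{k-1} ∈ {0, 1}` (conventions `ε₀ = ε_k = 0`).  Suppose scalars
`c_{i,j}, c'_{i,j}` (`1 ≤ i < j ≤ k`, with `c'` extended by `c'_{a,a} = 0`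
and `c'_{b,a} = -c'_{a,b}` for `a < b`) satisfy, for every `n × k` matrix
`B`, `∑_{i<j} c_{i,j}(B_{i,j} - B_{j,i}) = ∑_{i<j} c'_{i,j}((AB)_{i,j} - (AB)_{j,i})`.
If `i < j` and `c'_{i,j} ≠ 0`, then:
(a) if `ε_i = 1`, then `ε_{j-1} = 1` and `c'_{i+1,j-1} = c'_{i,j}`; and
(b) if `ε_j = 1`, then `ε_{i-1} = 1` and `c'_{i-1,j+1} = c'_{i,j}`. -/
theorem statement12 (F : Type*) [Field F] (k n : ℕ) (hk : 1 ≤ k) (hkn : k ≤ n)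
    (A : ℕ → ℕ → F) (lam eps : ℕ → F)
    (hlam : ∀ i, 1 ≤ i → i ≤ k → lam i = A i i)
    (heps : ∀ i, 1 ≤ i → i < k → eps i = A i (i + 1))
    (heps0 : eps 0 = 0) (hepsk : eps k = 0)
    (heps01 : ∀ i, 1 ≤ i → i < k → eps i = 0 ∨ eps i = 1)
    (hAzero : ∀ i j, 1 ≤ i → i ≤ k → 1 ≤ j → j ≤ k → j ≠ i → j ≠ i + 1 →
      A i j = 0)
    (hblock : ∀ i, 1 ≤ i → i < k → eps i = 1 → lam (i + 1) = lam i)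
    (c c' : ℕ → ℕ → F)
    (hc'diag : ∀ a, c' a a = 0)
    (hc'anti : ∀ a b, a < b → c' b a = -c' a b)
    (hident : ∀ B : ℕ → ℕ → F,
      ∑ i ∈ Finset.Icc 1 k, ∑ j ∈ Finset.Icc (i + 1) k,
        c i j * (B i j - B j i)
      = ∑ i ∈ Finset.Icc 1 k, ∑ j ∈ Finset.Icc (i + 1) k,
          c' i j * ((∑ l ∈ Finset.Icc 1 n, A i l * B l j)
            - (∑ l ∈ Finset.Icc 1 n, A j l * B l i))) :
    ∀ i j, 1 ≤ i → i < j → j ≤ k → c' i j ≠ 0 →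
      (eps i = 1 → eps (j - 1) = 1 ∧ c' (i + 1) (j - 1) = c' i j) ∧
      (eps j = 1 → eps (i - 1) = 1 ∧ c' (i - 1) (j + 1) = c' i j) :=
  fun _ _ hi hij hjk => statement12_general hkn ⟨hlam, heps, hAzero⟩
    ⟨heps0, hepsk, heps01, hblock⟩ hc'diag hc'anti hident hi (hij.le.trans hjk)
    (hi.trans hij.le) hjk
end

section
/- Let F be a field and let k ≤ n be positive integers. Let A be a k×n matrix over F in generalized Jordan normal form, with diagonal entries λ₁, …, λ_k and superdiagonal entries ε₁, …, ε_{k−1} ∈ {0,1}. Suppose there exist scalars c_{i,j}, c′_{i,j} ∈ F for 1 ≤ i < j ≤ k such that for every n×k matrix B over F one has Σ_{i<j} c_{i,j}(B_{i,j} − B_{j,i}) = Σ_{i<j} c′_{i,j}((AB)_{i,j} − (AB)_{j,i}). If c′_{i,j} ≠ 0 for some i < j, then λ_i = λ_j and the matrix A − λ_i·J_{k,n} has rank at most k − 2 (equivalently, the kernel of the linear map F^k → F^n given by the transpose (A − λ_i·J_{k,n})ᵀ has dimension at least 2). -/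
/-!
Let `P` be the leftmost `k × k` block of `A`, and let `C`, `S` be the alternating matrices with
upper entries `c`, `c'`. Testing the identity on all `B` gives `S * A = C * J`, hence `S * P = C`
is again alternating: `P` is self-adjoint for the alternating form `S`. Consequently generalized
eigenspaces of `P` for distinct eigenvalues are `S`-orthogonal, which gives `λ_i = λ_j`. For
`N = P - λ_i` all the forms `S * N ^ p` are alternating. Take `p` maximal such that `S * N ^ p` is
nonzero on the generalized `λ_i`-eigenspace. An alternating form that is nonzero has rank at least
two, and by maximality its values, as functionals, vanish on the range of `N`; since they come from
`S`, the relation `S * A = C * J` puts them in the kernel of `(A - λ_i J)ᵀ`.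
-/

open Module Matrix

section AlternatingForms

variable {R M : Type*} [CommRing R] [AddCommGroup M] [Module R M]
  {B : M →ₗ[R] M →ₗ[R] R} {f : End R M}

lemma isSelfAdjoint_of_isAlt_comp (hB : B.IsAlt) (hBf : (B ∘ₗ f).IsAlt) : B.IsSelfAdjoint f :=
  fun x y ↦ by
    calc B (f x) y = -B (f y) x := (hBf.neg y x).symm
      _ = B x (f y) := hB.neg (f y) x

lemma isSelfAdjoint_pow (hf : B.IsSelfAdjoint f) (p : ℕ) : B.IsSelfAdjoint (f ^ p : End R M) := by
  induction p with
  | zero => exact LinearMap.isAdjointPair_one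
  | succ p ih =>
    have h : LinearMap.IsAdjointPair B B (f ^ p * f) (f * f ^ p) := ih.mul hf
    rwa [← pow_succ, ← pow_succ'] at h

lemma isSelfAdjoint_sub_smul_one (hf : B.IsSelfAdjoint f) (μ : R) :
    B.IsSelfAdjoint (f - μ • (1 : End R M)) :=
  LinearMap.IsAdjointPair.sub hf (LinearMap.isAdjointPair_one.smul μ)

lemma isAlt_comp_sub_smul_one (hB : B.IsAlt) (hBf : (B ∘ₗ f).IsAlt) (μ : R) :
    (B ∘ₗ (f - μ • (1 : End R M))).IsAlt := fun x ↦ by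
  have hfx : B (f x) x = 0 := hBf x
  simp [hfx, hB.self_eq_zero x]

lemma isAlt_comp_pow (hB : B.IsAlt) (hBf : (B ∘ₗ f).IsAlt) (p : ℕ) :
    (B ∘ₗ (f ^ p : End R M)).IsAlt := fun x ↦ by
  have hadj (m : ℕ) := isSelfAdjoint_pow (isSelfAdjoint_of_isAlt_comp hB hBf) m
  obtain ⟨m, rfl | rfl⟩ := p.even_or_odd'
  · calc B ((f ^ (2 * m)) x) x = B ((f ^ m) ((f ^ m) x)) x := by rw [two_mul, pow_add]; rfl
      _ = B ((f ^ m) x) ((f ^ m) x) := hadj m _ _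
      _ = 0 := hB _
  · calc B ((f ^ (2 * m + 1)) x) x = B ((f ^ m) (f ((f ^ m) x))) x := by
          rw [two_mul, add_assoc, pow_add, pow_succ']; rfl
      _ = B (f ((f ^ m) x)) ((f ^ m) x) := hadj m _ _
      _ = 0 := hBf _

lemma apply_eq_zero_of_mem_ker_of_mem_range (hf : B.IsSelfAdjoint f) {x y : M}
    (hx : x ∈ LinearMap.ker f) (hy : y ∈ LinearMap.range f) : B x y = 0 := by
  obtain ⟨z, rfl⟩ := hy
  rw [← hf x z, LinearMap.mem_ker.1 hx, map_zero, LinearMap.zero_apply]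

end AlternatingForms

section GeneralizedEigenspaces

variable {K V : Type*} [Field K] [AddCommGroup V] [Module K V]
  {B : V →ₗ[K] V →ₗ[K] K} {f : End K V}

lemma mem_maxGenEigenspace_of_sub_smul_one_apply_mem {R M : Type*} [CommRing R] [AddCommGroup M]
    [Module R M] {f : End R M} {μ : R} {x : M}
    (hx : (f - μ • (1 : End R M)) x ∈ f.maxGenEigenspace μ) : x ∈ f.maxGenEigenspace μ := by
  obtain ⟨p, hp⟩ := (End.mem_maxGenEigenspace f μ _).1 hx
  exact (End.mem_maxGenEigenspace f μ x).2 ⟨p + 1, by rwa [pow_succ, End.mul_apply]⟩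

lemma maxGenEigenspace_le_range_pow (f : End K V) {μ ν : K} (hμν : μ ≠ ν) (p : ℕ) :
    f.maxGenEigenspace ν ≤ LinearMap.range ((f - μ • (1 : End K V)) ^ p) := by
  intro y hy
  obtain ⟨q, hq⟩ := (End.mem_maxGenEigenspace f ν y).1 hy
  have haeval (c : K) (r : ℕ) : Polynomial.aeval f ((Polynomial.X - Polynomial.C c) ^ r)
      = (f - c • (1 : End K V)) ^ r := by
    simp [Algebra.algebraMap_eq_smul_one]
  obtain ⟨a, b, hab⟩ : IsCoprime ((Polynomial.X - Polynomial.C μ) ^ p)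
      ((Polynomial.X - Polynomial.C ν) ^ q) :=
    (Polynomial.isCoprime_X_sub_C_of_isUnit_sub (sub_ne_zero.2 hμν).isUnit).pow
  refine ⟨Polynomial.aeval f a y, ?_⟩
  have h := congrArg (fun r ↦ Polynomial.aeval f r y) hab
  simpa [mul_comm a, haeval, hq, -map_pow] using h

lemma apply_eq_zero_of_mem_maxGenEigenspace_of_ne (hf : B.IsSelfAdjoint f) {μ ν : K}
    (hμν : μ ≠ ν) {x y : V} (hx : x ∈ f.maxGenEigenspace μ) (hy : y ∈ f.maxGenEigenspace ν) :
    B x y = 0 := by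
  obtain ⟨p, hp⟩ := (End.mem_maxGenEigenspace f μ x).1 hx
  exact apply_eq_zero_of_mem_ker_of_mem_range
    (isSelfAdjoint_pow (isSelfAdjoint_sub_smul_one hf μ) p) hp
    (maxGenEigenspace_le_range_pow f hμν p hy)

lemma linearIndependent_pair_of_isAlt (hB : B.IsAlt) {x y : V} (hxy : B x y ≠ 0) :
    LinearIndependent K ![B x, B y] := by
  have hyx : B y x ≠ 0 := mt hB.eq_iff.1 hxy
  refine LinearIndependent.pair_iff.2 fun s t hst ↦ ?_
  have hx := LinearMap.congr_fun hst x
  have hy := LinearMap.congr_fun hst y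
  simp only [LinearMap.add_apply, LinearMap.smul_apply, LinearMap.zero_apply, smul_eq_mul,
    hB.self_eq_zero, mul_zero, zero_add, add_zero, mul_eq_zero, hxy, hyx, or_false] at hx hy
  exact ⟨hy, hx⟩

lemma exists_mem_ker_pow_apply_ne_zero (hf : B.IsSelfAdjoint f) {x y : V} {q : ℕ}
    (hq : Codisjoint (LinearMap.ker (f ^ q)) (LinearMap.range (f ^ q)))
    (hx : x ∈ LinearMap.ker (f ^ q)) (hxy : B x y ≠ 0) :
    ∃ z ∈ LinearMap.ker (f ^ q), B x z ≠ 0 := by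
  obtain ⟨z, w, hz, hw, rfl⟩ := Submodule.codisjoint_iff_exists_add_eq.1 hq y
  refine ⟨z, hz, ?_⟩
  rwa [map_add, apply_eq_zero_of_mem_ker_of_mem_range (isSelfAdjoint_pow hf q) hx hw,
    add_zero] at hxy

lemma exists_linearIndependent_pair_comp_eq_zero [FiniteDimensional K V] (hB : B.IsAlt)
    (hBf : (B ∘ₗ f).IsAlt) {x y : V} {N : ℕ} (hx : (f ^ N) x = 0) (hxy : B x y ≠ 0) :
    ∃ u v : V, LinearIndependent K ![B u, B v] ∧ B u ∘ₗ f = 0 ∧ B v ∘ₗ f = 0 := by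
  have hf := isSelfAdjoint_of_isAlt_comp hB hBf
  obtain ⟨q, hq, hNq⟩ := (f.eventually_codisjoint_ker_pow_range_pow.and
    (Filter.eventually_ge_atTop N)).exists
  have hxq : x ∈ LinearMap.ker (f ^ q) := by
    rw [LinearMap.mem_ker, ← Nat.sub_add_cancel hNq, pow_add, End.mul_apply, hx, map_zero]
  have h_zero : ¬ ∀ z ∈ LinearMap.ker (f ^ q), B ((f ^ 0) z) = 0 := fun h ↦
    hxy (by simpa using LinearMap.congr_fun (h x hxq) y)
  have h_vanish : ∃ p, ∀ z ∈ LinearMap.ker (f ^ q), B ((f ^ p) z) = 0 :=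
    ⟨q, fun z hz ↦ by rw [LinearMap.mem_ker.1 hz, map_zero]⟩
  obtain ⟨p, hp, hp_succ⟩ :=
    Nat.exists_not_and_succ_of_not_zero_of_exists h_zero h_vanish
  push Not at hp
  obtain ⟨a, ha, hBa⟩ := hp
  obtain ⟨b', hab'⟩ := DFunLike.ne_iff.1 hBa
  have hpa : (f ^ p) a ∈ LinearMap.ker (f ^ q) := by
    rw [LinearMap.mem_ker, ← End.mul_apply, ← pow_add, add_comm, pow_add, End.mul_apply,
      LinearMap.mem_ker.1 ha, map_zero]
  obtain ⟨b, hb, hab⟩ := exists_mem_ker_pow_apply_ne_zero hf hq hpa hab'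
  have h_comp (z : V) (hz : z ∈ LinearMap.ker (f ^ q)) : B ((f ^ p) z) ∘ₗ f = 0 := by
    ext w
    rw [LinearMap.comp_apply, ← hf, ← End.mul_apply, ← pow_succ', hp_succ z hz]
  exact ⟨(f ^ p) a, (f ^ p) b, linearIndependent_pair_of_isAlt (isAlt_comp_pow hB hBf p) hab,
    h_comp a ha, h_comp b hb⟩

theorem two_le_finrank_range_inf_ker_dualMap [FiniteDimensional K V] (hB : B.IsAlt)
    (hBf : (B ∘ₗ f).IsAlt) {μ : K} {x y : V} (hx : x ∈ f.maxGenEigenspace μ) (hxy : B x y ≠ 0) :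
    2 ≤ finrank K ↥(LinearMap.range B ⊓ LinearMap.ker (f - μ • (1 : End K V)).dualMap) := by
  obtain ⟨N, hN⟩ := (End.mem_maxGenEigenspace f μ x).1 hx
  obtain ⟨u, v, huv, hu, hv⟩ := exists_linearIndependent_pair_comp_eq_zero hB
    (isAlt_comp_sub_smul_one hB hBf μ) hN hxy
  have hspan : Submodule.span K (Set.range ![B u, B v]) ≤
      LinearMap.range B ⊓ LinearMap.ker (f - μ • (1 : End K V)).dualMap := by
    rw [Submodule.span_le, Set.range_subset_iff, Fin.forall_fin_two]
    exact ⟨⟨⟨u, rfl⟩, hu⟩, ⟨⟨v, rfl⟩, hv⟩⟩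
  simpa [finrank_span_eq_card huv] using Submodule.finrank_mono hspan

end GeneralizedEigenspaces

section Matrices

variable {K m n : Type*} [Field K] [Fintype m] [DecidableEq m]

lemma single_mem_maxGenEigenspace_of_isUpperTriangular {R ι : Type*} [CommRing R] [Fintype ι]
    [LinearOrder ι] {T : Matrix ι ι R} (hT : T.IsUpperTriangular)
    (hdiag : ∀ a b, T a b ≠ 0 → T a a = T b b) (b : ι) :
    Pi.single b 1 ∈ End.maxGenEigenspace (toLin' T) (T b b) := by
  induction b using WellFoundedLT.induction with
  | ind b ih =>
    apply mem_maxGenEigenspace_of_sub_smul_one_apply_mem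
    rw [pi_eq_sum_univ' ((toLin' T - T b b • (1 : End R (ι → R))) (Pi.single b 1))]
    refine Submodule.sum_mem _ fun a _ ↦ ?_
    rcases eq_or_ne a b with rfl | hab
    · simp
    by_cases hTab : T a b = 0
    · simp [hTab, hab]
    · have hlt : a < b := lt_of_le_of_ne (not_lt.1 fun hba ↦ hTab (hT hba)) hab
      exact Submodule.smul_mem _ _ (hdiag a b hTab ▸ ih a hlt)

lemma isAlt_toBilin' {S : Matrix m m K} (hS : ∀ x, x ⬝ᵥ S *ᵥ x = 0) :
    (toBilin' S).IsAlt := fun x ↦ by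
  rw [toBilin'_apply']
  exact hS x

lemma isAlt_toBilin'_comp_toLin' {S P : Matrix m m K} (hS : ∀ x, x ⬝ᵥ S *ᵥ x = 0)
    (hSP : ∀ x, x ⬝ᵥ (S * P) *ᵥ x = 0) : (toBilin' S ∘ₗ toLin' P).IsAlt := fun x ↦ by
  have h : toBilin' S x (toLin' P x) = 0 := by
    rw [toBilin'_apply', toLin'_apply, mulVec_mulVec]
    exact hSP x
  exact (isAlt_toBilin' hS).eq_iff.1 h

lemma eq_of_single_mem_maxGenEigenspace {S P : Matrix m m K} (hS : ∀ x, x ⬝ᵥ S *ᵥ x = 0)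
    (hSP : ∀ x, x ⬝ᵥ (S * P) *ᵥ x = 0) {μ ν : K} {i j : m}
    (hi : Pi.single i 1 ∈ End.maxGenEigenspace (toLin' P) μ)
    (hj : Pi.single j 1 ∈ End.maxGenEigenspace (toLin' P) ν) (hij : S i j ≠ 0) : μ = ν := by
  by_contra hμν
  have hself := isSelfAdjoint_of_isAlt_comp (isAlt_toBilin' hS)
    (isAlt_toBilin'_comp_toLin' hS hSP)
  have hzero := apply_eq_zero_of_mem_maxGenEigenspace_of_ne hself hμν hi hj
  exact hij ((toBilin'_single S i j).symm.trans hzero)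

variable [Fintype n]

lemma mul_mul_eq_of_mul_eq_mul {R : Type*} [Semiring R] {S C : Matrix m m R} {A J : Matrix m n R}
    {J' : Matrix n m R} (hJ : J * J' = 1) (hSA : S * A = C * J) : S * (A * J') = C := by
  rw [← Matrix.mul_assoc, hSA, Matrix.mul_assoc, hJ, Matrix.mul_one]

/-- `J` and `J'` play the roles of the rectangular identity and its transpose, so that `A * J'` is
the leftmost square block of `A`. -/
lemma vecMul_sub_smul_eq_zero {S C : Matrix m m K} {A J : Matrix m n K} {J' : Matrix n m K}
    (hJ : J * J' = 1) (hSA : S * A = C * J) {μ : K} {x : m → K}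
    (hx : toBilin' S x ∘ₗ (toLin' (A * J') - μ • (1 : End K (m → K))) = 0) :
    x ᵥ* S ᵥ* (A - μ • J) = 0 := by
  have hfactor : S * (A - μ • J) = S * (A * J' - μ • 1) * J := by
    rw [Matrix.mul_sub S (A * J'), mul_mul_eq_of_mul_eq_mul hJ hSA]
    simp only [Matrix.mul_sub, Matrix.sub_mul, Matrix.mul_smul, Matrix.smul_mul, Matrix.mul_one,
      hSA]
  have hzero : x ᵥ* (S * (A * J' - μ • 1)) = 0 := by
    refine dotProduct_eq_zero _ fun y ↦ ?_
    have hy := LinearMap.congr_fun hx y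
    rw [LinearMap.comp_apply, toBilin'_apply'] at hy
    rw [← dotProduct_mulVec, ← mulVec_mulVec]
    simpa [sub_mulVec, smul_mulVec] using hy
  rw [vecMul_vecMul, hfactor, ← vecMul_vecMul, hzero, zero_vecMul]

theorem two_le_finrank_ker_transpose_sub_smul {S C : Matrix m m K} {A J : Matrix m n K}
    {J' : Matrix n m K} (hJ : J * J' = 1) (hS : ∀ x, x ⬝ᵥ S *ᵥ x = 0) (hC : ∀ x, x ⬝ᵥ C *ᵥ x = 0)
    (hSA : S * A = C * J) {μ : K} {i j : m}
    (hi : Pi.single i 1 ∈ End.maxGenEigenspace (toLin' (A * J')) μ) (hij : S i j ≠ 0) :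
    2 ≤ finrank K (LinearMap.ker (A - μ • J)ᵀ.mulVecLin) := by
  have hrange : LinearMap.range (toBilin' S) ⊓
      LinearMap.ker (toLin' (A * J') - μ • (1 : End K (m → K))).dualMap ≤
      (LinearMap.ker (A - μ • J)ᵀ.mulVecLin).map (dotProductEquiv K m).toLinearMap := by
    rintro _ ⟨⟨x, rfl⟩, hx⟩
    refine ⟨x ᵥ* S, ?_, ?_⟩
    · change (A - μ • J)ᵀ *ᵥ (x ᵥ* S) = 0
      rw [mulVec_transpose]
      exact vecMul_sub_smul_eq_zero hJ hSA hx
    · refine LinearMap.ext fun y ↦ ?_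
      simp [toBilin'_apply', dotProduct_mulVec]
  have hSP : ∀ x, x ⬝ᵥ (S * (A * J')) *ᵥ x = 0 := by
    rwa [mul_mul_eq_of_mul_eq_mul hJ hSA]
  have hform : toBilin' S (Pi.single i 1) (Pi.single j 1) ≠ 0 := by
    rwa [toBilin'_single]
  have hrank := two_le_finrank_range_inf_ker_dualMap (isAlt_toBilin' hS)
    (isAlt_toBilin'_comp_toLin' hS hSP) hi hform
  exact (hrank.trans (Submodule.finrank_mono hrange)).trans (Submodule.finrank_map_le _ _)

end Matrices

section StrictUpperPart

variable {R m n : Type*} [LinearOrder m]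

/-- The part of a square matrix strictly above the diagonal. -/
def strictUpperPart [Zero R] (c : Matrix m m R) : Matrix m m R :=
  of fun a b ↦ if a < b then c a b else 0

/-- The alternating matrix with the same entries above the diagonal as `c`. It represents the
functional `D ↦ ∑_{a < b} c a b * (D a b - D b a)` under the trace pairing. -/
def alternatingMatrix [AddGroup R] (c : Matrix m m R) : Matrix m m R :=
  strictUpperPart c - (strictUpperPart c)ᵀ

lemma alternatingMatrix_apply_of_lt [AddGroup R] (c : Matrix m m R) {a b : m}
    (hab : a < b) : alternatingMatrix c a b = c a b := by
  simp [alternatingMatrix, strictUpperPart, hab, hab.not_gt]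

lemma transpose_alternatingMatrix [AddGroup R] (c : Matrix m m R) :
    (alternatingMatrix c)ᵀ = -alternatingMatrix c := by
  simp [alternatingMatrix]

variable [CommRing R] [Fintype m]

lemma dotProduct_alternatingMatrix_mulVec_self (c : Matrix m m R) (x : m → R) :
    x ⬝ᵥ alternatingMatrix c *ᵥ x = 0 := by
  rw [alternatingMatrix, sub_mulVec, dotProduct_sub, mulVec_transpose, dotProduct_mulVec,
    dotProduct_comm, sub_self]

lemma sum_mul_sub_eq_trace [LocallyFiniteOrderTop m] (c D : Matrix m m R) :
    ∑ a, ∑ b ∈ Finset.Ioi a, c a b * (D a b - D b a) = trace ((alternatingMatrix c)ᵀ * D) := by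
  have hsum (a : m) (g : m → R) :
      ∑ b ∈ Finset.Ioi a, c a b * g b = ∑ b, strictUpperPart c a b * g b := by
    simp [strictUpperPart, Finset.sum_ite, ← Finset.filter_lt_eq_Ioi]
  calc ∑ a, ∑ b ∈ Finset.Ioi a, c a b * (D a b - D b a)
      = ∑ a, ∑ b, strictUpperPart c a b * (D a b - D b a) :=
        Finset.sum_congr rfl fun a _ ↦ hsum a _
    _ = trace ((strictUpperPart c)ᵀ * D) - trace (strictUpperPart c * D) := by
        simp only [mul_sub, Finset.sum_sub_distrib, trace, diag_apply, mul_apply, transpose_apply]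
        rw [Finset.sum_comm]
    _ = trace ((alternatingMatrix c)ᵀ * D) := by
        rw [alternatingMatrix, transpose_sub, transpose_transpose, Matrix.sub_mul, trace_sub]

lemma alternatingMatrix_mul_eq_of_forall_sum_eq [LocallyFiniteOrderTop m] [Fintype n]
    {c c' : Matrix m m R} {J A : Matrix m n R}
    (h : ∀ B : Matrix n m R,
      ∑ a, ∑ b ∈ Finset.Ioi a, c a b * ((J * B) a b - (J * B) b a) =
        ∑ a, ∑ b ∈ Finset.Ioi a, c' a b * ((A * B) a b - (A * B) b a)) :
    alternatingMatrix c' * A = alternatingMatrix c * J := by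
  have htrans : (alternatingMatrix c)ᵀ * J = (alternatingMatrix c')ᵀ * A := by
    refine ext_iff_trace_mul_right.2 fun B ↦ ?_
    simpa only [sum_mul_sub_eq_trace, ← Matrix.mul_assoc] using h B
  simpa only [transpose_alternatingMatrix, Matrix.neg_mul, neg_inj] using htrans.symm

end StrictUpperPart

section OneBasedIndices

variable {R : Type*} {k n : ℕ}

/-- The `k × n` matrix whose entries are those of `A` with indices counted from `1`. -/
def oneBased (k n : ℕ) (A : ℕ → ℕ → R) : Matrix (Fin k) (Fin n) R :=
  of fun a b ↦ A (a + 1) (b + 1)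

/-- The matrix `J_{k,n}`, with ones on the main diagonal and zeros elsewhere. -/
def rectOne (R : Type*) [Zero R] [One R] (k n : ℕ) : Matrix (Fin k) (Fin n) R :=
  of fun a b ↦ if (a : ℕ) = b then 1 else 0

lemma of_sub_ite_eq_oneBased_sub_smul_rectOne [Ring R] (A : ℕ → ℕ → R) (μ : R) :
    (of fun (a : Fin k) (b : Fin n) ↦ A (a + 1) (b + 1) - if (a : ℕ) = b then μ else 0) =
      oneBased k n A - μ • rectOne R k n := by
  ext
  simp [oneBased, rectOne]

lemma exists_oneBased_eq [Zero R] (B : Matrix (Fin k) (Fin n) R) : ∃ B', oneBased k n B' = B :=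
  ⟨fun i j ↦ if h : i - 1 < k ∧ j - 1 < n then B ⟨i - 1, h.1⟩ ⟨j - 1, h.2⟩ else 0, by
    ext; simp [oneBased]⟩

lemma rectOne_mul [NonAssocSemiring R] {m : Type*} (hkn : k ≤ n) (B : Matrix (Fin n) m R) :
    rectOne R k n * B = B.submatrix (Fin.castLE hkn) id := by
  ext a b
  have hcast (l : Fin n) : (a : ℕ) = l ↔ Fin.castLE hkn a = l := by simp [Fin.ext_iff]
  simp [rectOne, mul_apply, hcast]

lemma mul_transpose_rectOne [NonAssocSemiring R] {m : Type*} (hkn : k ≤ n)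
    (A : Matrix m (Fin n) R) : A * (rectOne R k n)ᵀ = A.submatrix id (Fin.castLE hkn) := by
  ext a b
  have hcast (l : Fin n) : (b : ℕ) = l ↔ Fin.castLE hkn b = l := by simp [Fin.ext_iff]
  simp [rectOne, mul_apply, hcast]

lemma rectOne_mul_transpose [NonAssocSemiring R] (hkn : k ≤ n) :
    rectOne R k n * (rectOne R k n)ᵀ = 1 := by
  rw [mul_transpose_rectOne hkn]
  ext a b
  simp [rectOne, one_apply, Fin.ext_iff]

lemma sum_Icc_one_eq_sum_fin [AddCommMonoid R] (g : ℕ → R) :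
    ∑ i ∈ Finset.Icc 1 k, g i = ∑ a : Fin k, g (a + 1) := by
  rw [Fin.sum_univ_eq_sum_range (fun a ↦ g (a + 1)), Finset.range_eq_Ico,
    Finset.sum_Ico_add' g 0 k 1]
  rfl

lemma sum_Icc_succ_eq_sum_Ioi [AddCommMonoid R] (a : Fin k) (g : ℕ → R) :
    ∑ j ∈ Finset.Icc (a + 1 + 1 : ℕ) k, g j = ∑ b ∈ Finset.Ioi a, g (b + 1) := by
  have hmap : ∑ b ∈ Finset.Ioi a, g (b + 1) = ∑ j ∈ Finset.Ioo (a : ℕ) k, g (j + 1) := by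
    rw [← Fin.map_valEmbedding_Ioi, Finset.sum_map]
    rfl
  rw [hmap, ← Finset.Ico_succ_left_eq_Ioo, Finset.sum_Ico_add' g _ _ 1]
  rfl

lemma oneBased_mul_oneBased [NonUnitalNonAssocSemiring R] {m : ℕ} (A B : ℕ → ℕ → R) :
    oneBased k n A * oneBased n m B =
      oneBased k m fun i j ↦ ∑ l ∈ Finset.Icc 1 n, A i l * B l j := by
  ext a b
  simp [oneBased, mul_apply, sum_Icc_one_eq_sum_fin]

lemma sum_oneBased_mul_sub [CommRing R] (c D : ℕ → ℕ → R) :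
    ∑ i ∈ Finset.Icc 1 k, ∑ j ∈ Finset.Icc (i + 1) k, c i j * (D i j - D j i) =
      ∑ a, ∑ b ∈ Finset.Ioi a,
        oneBased k k c a b * (oneBased k k D a b - oneBased k k D b a) := by
  rw [sum_Icc_one_eq_sum_fin]
  exact Finset.sum_congr rfl fun a _ ↦ sum_Icc_succ_eq_sum_Ioi a _

end OneBasedIndices

section Osserman

variable {F : Type*} [Field F] {k n : ℕ}

lemma single_mem_maxGenEigenspace_oneBased {A : ℕ → ℕ → F} {lam : ℕ → F}
    (hlam : ∀ i, 1 ≤ i → i ≤ k → lam i = A i i)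
    (hupper : ∀ i j, 1 ≤ j → j < i → i ≤ k → A i j = 0)
    (hblock : ∀ i j, 1 ≤ i → i < j → j ≤ k → A i j ≠ 0 → lam i = lam j) (a : Fin k) :
    Pi.single a 1 ∈ End.maxGenEigenspace (toLin' (oneBased k k A)) (lam (a + 1)) := by
  have hdiag (b : Fin k) : oneBased k k A b b = lam (b + 1) :=
    (hlam _ (by omega) (by omega)).symm
  have htri : (oneBased k k A).IsUpperTriangular := fun b d hdb ↦
    hupper _ _ (by omega) (Nat.succ_lt_succ hdb) (by omega)
  rw [← hdiag]
  refine single_mem_maxGenEigenspace_of_isUpperTriangular htri (fun b d hbd ↦ ?_) a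
  rcases eq_or_lt_of_le (not_lt.1 fun hdb ↦ hbd (htri hdb)) with rfl | hlt
  · rfl
  · rw [hdiag, hdiag]
    exact hblock _ _ (by omega) (Nat.succ_lt_succ hlt) (by omega) hbd

lemma alternatingMatrix_oneBased_mul_eq {R : Type*} [CommRing R] (hkn : k ≤ n)
    {A c c' : ℕ → ℕ → R}
    (hident : ∀ B : ℕ → ℕ → R,
      ∑ i ∈ Finset.Icc 1 k, ∑ j ∈ Finset.Icc (i + 1) k, c i j * (B i j - B j i)
      = ∑ i ∈ Finset.Icc 1 k, ∑ j ∈ Finset.Icc (i + 1) k,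
          c' i j * ((∑ l ∈ Finset.Icc 1 n, A i l * B l j)
            - (∑ l ∈ Finset.Icc 1 n, A j l * B l i))) :
    alternatingMatrix (oneBased k k c') * oneBased k n A =
      alternatingMatrix (oneBased k k c) * rectOne R k n := by
  refine alternatingMatrix_mul_eq_of_forall_sum_eq fun B ↦ ?_
  obtain ⟨B, rfl⟩ := exists_oneBased_eq B
  have htop : rectOne R k n * oneBased n k B = oneBased k k B := rectOne_mul hkn _
  rw [htop, oneBased_mul_oneBased, ← sum_oneBased_mul_sub, hident, ← sum_oneBased_mul_sub]

end Osserman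

theorem statement13_general (F : Type*) [Field F] (k n : ℕ) (hkn : k ≤ n)
    (A : ℕ → ℕ → F) (lam : ℕ → F)
    (hlam : ∀ i, 1 ≤ i → i ≤ k → lam i = A i i)
    (hupper : ∀ i j, 1 ≤ j → j < i → i ≤ k → A i j = 0)
    (hblock : ∀ i j, 1 ≤ i → i < j → j ≤ k → A i j ≠ 0 → lam i = lam j)
    (c c' : ℕ → ℕ → F)
    (hident : ∀ B : ℕ → ℕ → F,
      ∑ i ∈ Finset.Icc 1 k, ∑ j ∈ Finset.Icc (i + 1) k,
        c i j * (B i j - B j i)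
      = ∑ i ∈ Finset.Icc 1 k, ∑ j ∈ Finset.Icc (i + 1) k,
          c' i j * ((∑ l ∈ Finset.Icc 1 n, A i l * B l j)
            - (∑ l ∈ Finset.Icc 1 n, A j l * B l i))) :
    ∀ i j, 1 ≤ i → i < j → j ≤ k → c' i j ≠ 0 →
      lam i = lam j ∧
      2 ≤ Module.finrank F
        ↥(LinearMap.ker (Matrix.mulVecLin (Matrix.transpose
          (Matrix.of fun (a : Fin k) (b : Fin n) =>
            A (a + 1) (b + 1) -
              if (a : ℕ) = (b : ℕ) then lam i else 0)))) := by
  intro i j hi hij hjk hc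
  obtain ⟨i, rfl⟩ := Nat.exists_eq_add_of_le' hi
  obtain ⟨j, rfl⟩ := Nat.exists_eq_add_of_le' (hi.trans hij.le)
  have hSA := alternatingMatrix_oneBased_mul_eq hkn hident
  have hJ := rectOne_mul_transpose (R := F) hkn
  have hleft : oneBased k n A * (rectOne F k n)ᵀ = oneBased k k A := mul_transpose_rectOne hkn _
  have hS := dotProduct_alternatingMatrix_mulVec_self (oneBased k k c')
  have hC := dotProduct_alternatingMatrix_mulVec_self (oneBased k k c)
  have hSP : ∀ x, x ⬝ᵥ (alternatingMatrix (oneBased k k c') * oneBased k k A) *ᵥ x = 0 := by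
    rwa [← hleft, mul_mul_eq_of_mul_eq_mul hJ hSA]
  have hsingle := single_mem_maxGenEigenspace_oneBased hlam hupper hblock
  have hentry : alternatingMatrix (oneBased k k c') ⟨i, by omega⟩ ⟨j, by omega⟩ ≠ 0 := by
    rwa [alternatingMatrix_apply_of_lt _ (Fin.mk_lt_mk.2 (by omega))]
  refine ⟨eq_of_single_mem_maxGenEigenspace hS hSP (hsingle ⟨i, by omega⟩) (hsingle ⟨j, by omega⟩)
    hentry, ?_⟩
  rw [of_sub_ite_eq_oneBased_sub_smul_rectOne]
  rw [← hleft] at hsingle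
  exact two_le_finrank_ker_transpose_sub_smul hJ hS hC hSA (hsingle ⟨i, by omega⟩) hentry

/-- (Lemma `technical-second` of Osserman.)  Let `A` be a
`k × n` matrix over a field `F` (indexed by `{1, …, k} × {1, …, n}`) in
generalized Jordan normal form, with diagonal entries `λ₁, …, λ_k` and
superdiagonal entries `ε₁, …, ε_{k-1} ∈ {0, 1}`.  Suppose scalars
`c_{i,j}, c'_{i,j}` (`1 ≤ i < j ≤ k`) satisfy, for every `n × k` matrix `B`,
`∑_{i<j} c_{i,j}(B_{i,j} - B_{j,i}) = ∑_{i<j} c'_{i,j}((AB)_{i,j} - (AB)_{j,i})`.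
If `c'_{i,j} ≠ 0` for some `i < j`, then `λ_i = λ_j` and the kernel of the
linear map `F^k → F^n` given by the transpose of `A - λ_i J_{k,n}` has
dimension at least `2` (i.e. `A - λ_i J_{k,n}` has rank at most `k - 2`). -/
theorem statement13 (F : Type*) [Field F] (k n : ℕ) (hk : 1 ≤ k) (hkn : k ≤ n)
    (A : ℕ → ℕ → F) (lam eps : ℕ → F)
    (hlam : ∀ i, 1 ≤ i → i ≤ k → lam i = A i i)
    (heps : ∀ i, 1 ≤ i → i < k → eps i = A i (i + 1))
    (heps0 : eps 0 = 0) (hepsk : eps k = 0)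
    (heps01 : ∀ i, 1 ≤ i → i < k → eps i = 0 ∨ eps i = 1)
    (hAzero : ∀ i j, 1 ≤ i → i ≤ k → 1 ≤ j → j ≤ k → j ≠ i → j ≠ i + 1 →
      A i j = 0)
    (hblock : ∀ i, 1 ≤ i → i < k → eps i = 1 → lam (i + 1) = lam i)
    (c c' : ℕ → ℕ → F)
    (hident : ∀ B : ℕ → ℕ → F,
      ∑ i ∈ Finset.Icc 1 k, ∑ j ∈ Finset.Icc (i + 1) k,
        c i j * (B i j - B j i)
      = ∑ i ∈ Finset.Icc 1 k, ∑ j ∈ Finset.Icc (i + 1) k,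
          c' i j * ((∑ l ∈ Finset.Icc 1 n, A i l * B l j)
            - (∑ l ∈ Finset.Icc 1 n, A j l * B l i))) :
    ∀ i j, 1 ≤ i → i < j → j ≤ k → c' i j ≠ 0 →
      lam i = lam j ∧
      2 ≤ Module.finrank F
        ↥(LinearMap.ker (Matrix.mulVecLin (Matrix.transpose
          (Matrix.of fun (a : Fin k) (b : Fin n) =>
            A (a + 1) (b + 1) -
              if (a : ℕ) = (b : ℕ) then lam i else 0)))) := by
  refine statement13_general F k n hkn A lam hlam
    (fun i j hj hji hik ↦ hAzero i j (by omega) hik hj (by omega) (by omega) (by omega))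
    (fun i j hi hij hjk hA ↦ ?_) c c' hident
  obtain rfl : j = i + 1 := by
    by_contra hne
    exact hA (hAzero i j hi (by omega) (by omega) hjk (by omega) hne)
  exact (hblock i hi (by omega) ((heps01 i hi (by omega)).resolve_left
    (heps i hi (by omega) ▸ hA))).symm
end
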